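/- arXiv:1607.04571 — 8 statements merged into one kernel-verified Lean document; each statement's English description precedes it below -/
import Mathlib

section
/- Let ε, ε̃, ε' ∈ {−1, 1}, let I ⊆ ℝ be an open interval, let h : I → ℝ be a function, and let f : I → ℝ be twice differentiable with ε'·(ε + ε̃·f'(s)²) > 0 for every s ∈ I. Then the following are equivalent: (i) for every s ∈ I, ε̃ · (d/ds)[ f'(s) / √(ε'(ε + ε̃ f'(s)²)) ] = (1 − f'(s)·h(s)) / √(ε'(ε + ε̃ f'(s)²)); (ii) for every s ∈ I, f''(s) = (ε̃ + ε f'(s)²)·(1 − f'(s)·h(s)). -/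
/-!
Since `p / √(c + k p²)` has derivative `c / √(c + k p²)³`, the derivative of `f' / √Q`, where
`Q = ε' (ε + εt f'²)`, is `ε' ε f'' / √Q³`. Multiplying (i) by `√Q³` leaves
`εt ε' ε f'' = ε' (ε + εt f'²) (1 - f' h)`, and dividing by `εt ε' ε` gives
`f'' = (εt⁻¹ + ε⁻¹ f'²) (1 - f' h)`, which is (ii) because signs are their own inverses.
-/

theorem hasDerivAt_div_sqrt_const_add_mul_sq {c k p : ℝ} (hp : 0 < c + k * p ^ 2) :
    HasDerivAt (fun x : ℝ => x / √(c + k * x ^ 2)) (c / √(c + k * p ^ 2) ^ 3) p := by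
  have hsqrt_ne : √(c + k * p ^ 2) ≠ 0 := (Real.sqrt_pos.2 hp).ne'
  have hradicand : HasDerivAt (fun x : ℝ => c + k * x ^ 2) (k * (2 * p)) p := by
    simpa using ((hasDerivAt_pow 2 p).const_mul k).const_add c
  refine ((hasDerivAt_id' p).fun_div (hradicand.sqrt hp.ne') hsqrt_ne).congr_deriv ?_
  field_simp
  rw [Real.sq_sqrt hp.le]
  ring

theorem div_sqrt_pow_three_eq_div_sqrt_iff {x y q : ℝ} (hq : 0 < q) :
    x / √q ^ 3 = y / √q ↔ x = y * q := by
  have hsqrt_ne : √q ≠ 0 := (Real.sqrt_pos.2 hq).ne'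
  rw [div_eq_iff (pow_ne_zero 3 hsqrt_ne), pow_succ', div_mul_eq_mul_div, mul_div_assoc,
    mul_div_cancel_left₀ _ hsqrt_ne, Real.sq_sqrt hq.le]

theorem stmt_0_general {ε εt ε' r s : ℝ} {u : ℝ → ℝ} (hε : ε ≠ 0) (hεt : εt ≠ 0)
    (hu : DifferentiableAt ℝ u s) (hpos : 0 < ε' * (ε + εt * u s ^ 2)) :
    εt * deriv (fun t => u t / √(ε' * (ε + εt * u t ^ 2))) s =
        r / √(ε' * (ε + εt * u s ^ 2)) ↔
      deriv u s = (εt⁻¹ + ε⁻¹ * u s ^ 2) * r := by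
  have hε' : ε' ≠ 0 := left_ne_zero_of_mul hpos.ne'
  have hderiv : deriv (fun t => u t / √(ε' * (ε + εt * u t ^ 2))) s =
      ε' * ε * deriv u s / √(ε' * (ε + εt * u s ^ 2)) ^ 3 := by
    simp only [mul_add, ← mul_assoc] at hpos ⊢
    rw [← div_mul_eq_mul_div]
    exact ((hasDerivAt_div_sqrt_const_add_mul_sq hpos).comp s hu.hasDerivAt).deriv
  calc
    _ ↔ εt * (ε' * ε * deriv u s) / √(ε' * (ε + εt * u s ^ 2)) ^ 3 =
        r / √(ε' * (ε + εt * u s ^ 2)) := by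
      rw [hderiv, ← mul_div_assoc]
    _ ↔ εt * (ε' * ε * deriv u s) = r * (ε' * (ε + εt * u s ^ 2)) :=
      div_sqrt_pow_three_eq_div_sqrt_iff hpos
    _ ↔ (εt * ε' * ε) * deriv u s =
        (εt * ε' * ε) * ((εt⁻¹ + ε⁻¹ * u s ^ 2) * r) := by
      field_simp
    _ ↔ _ := mul_right_inj' (mul_ne_zero (mul_ne_zero hεt hε') hε)

/-- Equivalence between the divergence form and the explicit form of the
translating-soliton ODE over a one-dimensional base. -/
theorem stmt_0 (ε εt ε' : ℝ) (hε : ε = 1 ∨ ε = -1) (hεt : εt = 1 ∨ εt = -1)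
    (hε' : ε' = 1 ∨ ε' = -1) (a b : ℝ) (h f : ℝ → ℝ)
    (hf : ∀ s ∈ Set.Ioo a b, DifferentiableAt ℝ f s)
    (hf' : ∀ s ∈ Set.Ioo a b, DifferentiableAt ℝ (deriv f) s)
    (hpos : ∀ s ∈ Set.Ioo a b, 0 < ε' * (ε + εt * (deriv f s) ^ 2)) :
    (∀ s ∈ Set.Ioo a b,
        εt * deriv (fun t => deriv f t / Real.sqrt (ε' * (ε + εt * (deriv f t) ^ 2))) s =
          (1 - deriv f s * h s) / Real.sqrt (ε' * (ε + εt * (deriv f s) ^ 2))) ↔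
    (∀ s ∈ Set.Ioo a b,
        deriv (deriv f) s = (εt + ε * (deriv f s) ^ 2) * (1 - deriv f s * h s)) := by
  refine forall₂_congr fun s hs => ?_
  rcases hε with rfl | rfl <;> rcases hεt with rfl | rfl <;>
    simpa only [inv_one, inv_neg] using
      stmt_0_general (by norm_num) (by norm_num) (hf' s hs) (hpos s hs)
end

section
/- Let ε, ε̃ ∈ {−1, 1}, let I, J ⊆ ℝ be open intervals, let h : ℝ → ℝ be a function, and let f : ℝ → ℝ be twice differentiable on I satisfying the translating-soliton ODE f''(s) = (ε̃ + ε f'(s)²)(1 − f'(s)h(s)) for every s ∈ I. Let α : ℝ → ℝ be twice differentiable on J with α(J) ⊆ I, f(α(y)) = y for every y ∈ J, and α'(y) ≠ 0 for every y ∈ J. Then for every y ∈ J, α''(y) = (ε + ε̃ α'(y)²)·(h(α(y)) − α'(y)). -/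
/-!
Differentiating `f (α y) = y` gives `f' (α y) * α' y = 1`, so `α' = 1 / (f' ∘ α)`. Hence `α'` is
itself differentiable, with `α'' = -(f'' ∘ α) * α' ^ 3`. Substituting the equation for `f''` and
distributing the factor `α' ^ 3` as `α' ^ 2 * α'` over the two factors of its right-hand side
exchanges the roles of `ε` and `εt`.
-/

section LocalInverse

open Filter Topology

variable {𝕜 : Type*} [NontriviallyNormedField 𝕜]

theorem mul_eq_one_of_hasDerivAt_of_comp_eventuallyEq_id {f g : 𝕜 → 𝕜} {f' g' y : 𝕜}
    (hf : HasDerivAt f f' (g y)) (hg : HasDerivAt g g' y) (hfg : f ∘ g =ᶠ[𝓝 y] id) :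
    f' * g' = 1 :=
  (hf.comp y hg).unique ((hasDerivAt_id y).congr_of_eventuallyEq hfg)

theorem deriv_eventuallyEq_inv_of_comp_eventuallyEq_id {f g : 𝕜 → 𝕜} {y : 𝕜}
    (hf : ∀ᶠ z in 𝓝 y, DifferentiableAt 𝕜 f (g z)) (hg : ∀ᶠ z in 𝓝 y, DifferentiableAt 𝕜 g z)
    (hfg : f ∘ g =ᶠ[𝓝 y] id) :
    deriv g =ᶠ[𝓝 y] fun z => (deriv f (g z))⁻¹ := by
  filter_upwards [hf, hg, hfg.eventuallyEq_nhds] with z hfz hgz hfgz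
  exact eq_inv_of_mul_eq_one_right
    (mul_eq_one_of_hasDerivAt_of_comp_eventuallyEq_id hfz.hasDerivAt hgz.hasDerivAt hfgz)

theorem hasDerivAt_deriv_of_comp_eventuallyEq_id {f g : 𝕜 → 𝕜} {f'' y : 𝕜}
    (hf : ∀ᶠ z in 𝓝 y, DifferentiableAt 𝕜 f (g z)) (hf' : HasDerivAt (deriv f) f'' (g y))
    (hg : ∀ᶠ z in 𝓝 y, DifferentiableAt 𝕜 g z) (hfg : f ∘ g =ᶠ[𝓝 y] id) :
    HasDerivAt (deriv g) (-f'' * deriv g y ^ 3) y := by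
  have hg_eq := deriv_eventuallyEq_inv_of_comp_eventuallyEq_id hf hg hfg
  have hne : deriv f (g y) ≠ 0 :=
    left_ne_zero_of_mul_eq_one (mul_eq_one_of_hasDerivAt_of_comp_eventuallyEq_id
      hf.self_of_nhds.hasDerivAt hg.self_of_nhds.hasDerivAt hfg)
  have hinv : HasDerivAt (fun z => (deriv f (g z))⁻¹)
      (-(f'' * deriv g y) / deriv f (g y) ^ 2) y :=
    (hf'.comp y hg.self_of_nhds.hasDerivAt).fun_inv hne
  refine (hinv.congr_of_eventuallyEq hg_eq).congr_deriv ?_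
  rw [hg_eq.eq_of_nhds]
  field_simp

end LocalInverse

theorem stmt_1_general {𝕜 : Type*} [NontriviallyNormedField 𝕜] {ε εt : 𝕜} {I J : Set 𝕜}
    (hJ : IsOpen J) {h f α : 𝕜 → 𝕜}
    (hf : ∀ s ∈ I, DifferentiableAt 𝕜 f s)
    (hf' : ∀ s ∈ I, DifferentiableAt 𝕜 (deriv f) s)
    (hODE : ∀ s ∈ I, deriv (deriv f) s = (εt + ε * deriv f s ^ 2) * (1 - deriv f s * h s))
    (hα : ∀ y ∈ J, DifferentiableAt 𝕜 α y)
    (hmaps : Set.MapsTo α J I) (hinv : Set.LeftInvOn f α J) {y : 𝕜} (hy : y ∈ J) :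
    HasDerivAt (deriv α) ((ε + εt * deriv α y ^ 2) * (h (α y) - deriv α y)) y := by
  have hJy := hJ.mem_nhds hy
  have hfα : f ∘ α =ᶠ[nhds y] id := Filter.eventuallyEq_of_mem hJy hinv
  have hmul : deriv f (α y) * deriv α y = 1 :=
    mul_eq_one_of_hasDerivAt_of_comp_eventuallyEq_id (hf _ (hmaps hy)).hasDerivAt
      (hα y hy).hasDerivAt hfα
  have hα'' : HasDerivAt (deriv α) (-deriv (deriv f) (α y) * deriv α y ^ 3) y :=
    hasDerivAt_deriv_of_comp_eventuallyEq_id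
      (Filter.eventually_of_mem hJy fun z hz => hf _ (hmaps hz)) (hf' _ (hmaps hy)).hasDerivAt
      (Filter.eventually_of_mem hJy hα) hfα
  refine hα''.congr_deriv ?_
  calc -deriv (deriv f) (α y) * deriv α y ^ 3
      = (εt * deriv α y ^ 2 + ε * (deriv f (α y) * deriv α y) ^ 2) *
          (deriv f (α y) * deriv α y * h (α y) - deriv α y) := by
        rw [hODE _ (hmaps hy)]; ring
    _ = (ε + εt * deriv α y ^ 2) * (h (α y) - deriv α y) := by
        rw [hmul]; ring

/-- The ODE satisfied by a local inverse of a solution of the translating-soliton ODE. -/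
theorem stmt_1 (ε εt : ℝ) (hε : ε = 1 ∨ ε = -1) (hεt : εt = 1 ∨ εt = -1)
    (a b c d : ℝ) (h f α : ℝ → ℝ)
    (hf : ∀ s ∈ Set.Ioo a b, DifferentiableAt ℝ f s)
    (hf' : ∀ s ∈ Set.Ioo a b, DifferentiableAt ℝ (deriv f) s)
    (hODE : ∀ s ∈ Set.Ioo a b,
      deriv (deriv f) s = (εt + ε * (deriv f s) ^ 2) * (1 - deriv f s * h s))
    (hα : ∀ y ∈ Set.Ioo c d, DifferentiableAt ℝ α y)
    (hα' : ∀ y ∈ Set.Ioo c d, DifferentiableAt ℝ (deriv α) y)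
    (hmaps : ∀ y ∈ Set.Ioo c d, α y ∈ Set.Ioo a b)
    (hinv : ∀ y ∈ Set.Ioo c d, f (α y) = y)
    (hne : ∀ y ∈ Set.Ioo c d, deriv α y ≠ 0) :
    ∀ y ∈ Set.Ioo c d,
      deriv (deriv α) y = (ε + εt * (deriv α y) ^ 2) * (h (α y) - deriv α y) :=
  fun _ hy => (stmt_1_general isOpen_Ioo hf hf' hODE hα hmaps hinv hy).deriv
end

section
/- Let ε̃ ∈ {−1, 1} and set ε = −ε̃. Let I ⊆ ℝ be an open interval and h : I → ℝ be continuously differentiable. Then for every s₀ ∈ I, every f₀ ∈ ℝ, and every f₁ ∈ (−1, 1), there exists a twice continuously differentiable function f : I → ℝ with f(s₀) = f₀, f'(s₀) = f₁, such that f'(s) ∈ (−1, 1) for every s ∈ I, and f''(s) = ε̃·(1 − f'(s)²)·(1 − f'(s)h(s)) for every s ∈ I. -/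
/-!
The slope `w = f'` satisfies `w' = (1 - w²) g(s, w)` with `g(s, w) = ε̃ (1 - w h(s))`. Instead of
trapping `w` between the stationary solutions `±1`, write `w = tanh u`: the factor `1 - w²` is the
derivative of `tanh`, so the equation becomes `u' = g(s, tanh u)`. Its right-hand side is bounded
and Lipschitz in `u`, uniformly for `s` in compact intervals, so Picard–Lindelöf solves it on every
compact subinterval at once, and by uniqueness these solutions glue to a solution on all of `I`.
-/

open Set Filter Topology
open scoped NNReal

theorem exists_mem_Icc_mem_nhds_subset_of_ordConnected {α : Type*} [TopologicalSpace α]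
    [LinearOrder α] [OrderTopology α] {I : Set α} (hI : IsOpen I) (hI' : I.OrdConnected)
    {t₀ t : α} (ht₀ : t₀ ∈ I) (ht : t ∈ I) :
    ∃ c d, t₀ ∈ Icc c d ∧ Icc c d ∈ 𝓝 t ∧ Icc c d ⊆ I := by
  obtain ⟨c, d, htcd, hnhds, hsub⟩ := exists_Icc_mem_subset_of_mem_nhds (hI.mem_nhds ht)
  have hcd : c ≤ d := htcd.1.trans htcd.2
  refine ⟨min c t₀, max d t₀, ⟨min_le_right _ _, le_max_right _ _⟩,
    mem_of_superset hnhds (Icc_subset_Icc (min_le_left _ _) (le_max_left _ _)), hI'.out ?_ ?_⟩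
  · exact min_rec' (· ∈ I) (hsub (left_mem_Icc.2 hcd)) ht₀
  · exact max_rec' (· ∈ I) (hsub (right_mem_Icc.2 hcd)) ht₀

section GlobalExistence

variable {E : Type*} [NormedAddCommGroup E] [NormedSpace ℝ E] {v : ℝ → E → E} {I : Set ℝ}
  {t₀ : ℝ} {x₀ : E} {K L : ℝ → ℝ≥0}

theorem eqOn_of_isIntegralCurveOn_of_lipschitzWith {γ γ' : ℝ → E} (hI : I.OrdConnected)
    (hK : ContinuousOn K I) (hv : ∀ t ∈ I, LipschitzWith (K t) (v t)) (ht₀ : t₀ ∈ I)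
    (hγ : IsIntegralCurveOn γ v I) (hγ' : IsIntegralCurveOn γ' v I) (h₀ : γ t₀ = γ' t₀) :
    EqOn γ γ' I := by
  intro t ht
  have hsub : uIcc t₀ t ⊆ I := hI.uIcc_subset ht₀ ht
  obtain ⟨C, hC⟩ := isCompact_uIcc.bddAbove_image (hK.mono hsub)
  have hlip : ∀ r ∈ uIcc t₀ t, LipschitzOnWith C (v r) univ := fun r hr ↦
    ((hv r (hsub hr)).weaken (hC (mem_image_of_mem K hr))).lipschitzOnWith
  replace hγ := hγ.mono hsub
  replace hγ' := hγ'.mono hsub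
  rcases le_total t₀ t with hle | hle
  · rw [uIcc_of_le hle] at hlip hγ hγ'
    exact ODE_solution_unique_of_mem_Icc_right
      (fun r hr ↦ hlip r (Ico_subset_Icc_self hr))
      hγ.continuousOn
      (fun r hr ↦ (hγ r (Ico_subset_Icc_self hr)).mono_of_mem_nhdsWithin
        (Icc_mem_nhdsGE_of_mem hr))
      (fun _ _ ↦ mem_univ _)
      hγ'.continuousOn
      (fun r hr ↦ (hγ' r (Ico_subset_Icc_self hr)).mono_of_mem_nhdsWithin
        (Icc_mem_nhdsGE_of_mem hr))
      (fun _ _ ↦ mem_univ _) h₀ (right_mem_Icc.2 hle)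
  · rw [uIcc_of_ge hle] at hlip hγ hγ'
    exact ODE_solution_unique_of_mem_Icc_left
      (fun r hr ↦ hlip r (Ioc_subset_Icc_self hr))
      hγ.continuousOn
      (fun r hr ↦ (hγ r (Ioc_subset_Icc_self hr)).mono_of_mem_nhdsWithin
        (Icc_mem_nhdsLE_of_mem hr))
      (fun _ _ ↦ mem_univ _)
      hγ'.continuousOn
      (fun r hr ↦ (hγ' r (Ioc_subset_Icc_self hr)).mono_of_mem_nhdsWithin
        (Icc_mem_nhdsLE_of_mem hr))
      (fun _ _ ↦ mem_univ _) h₀ (left_mem_Icc.2 hle)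

theorem exists_isIntegralCurveOn_of_forall_Icc (hI : IsOpen I) (hI' : I.OrdConnected)
    (hK : ContinuousOn K I) (hv : ∀ t ∈ I, LipschitzWith (K t) (v t)) (ht₀ : t₀ ∈ I)
    (hex : ∀ c d, t₀ ∈ Icc c d → Icc c d ⊆ I →
      ∃ γ : ℝ → E, γ t₀ = x₀ ∧ IsIntegralCurveOn γ v (Icc c d)) :
    ∃ γ : ℝ → E, γ t₀ = x₀ ∧ IsIntegralCurveOn γ v I := by
  have hloc : ∀ t ∈ I, ∃ c d, ∃ γ : ℝ → E, t₀ ∈ Icc c d ∧ Icc c d ∈ 𝓝 t ∧ Icc c d ⊆ I ∧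
      γ t₀ = x₀ ∧ IsIntegralCurveOn γ v (Icc c d) := fun t ht ↦ by
    obtain ⟨c, d, hmem, hnhds, hsub⟩ :=
      exists_mem_Icc_mem_nhds_subset_of_ordConnected hI hI' ht₀ ht
    obtain ⟨γ, hγ₀, hγ⟩ := hex c d hmem hsub
    exact ⟨c, d, γ, hmem, hnhds, hsub, hγ₀, hγ⟩
  choose! c d γ hmem hnhds hsub hγ₀ hγ using hloc
  refine ⟨fun t ↦ γ t t, hγ₀ t₀ ht₀, fun t ht ↦ HasDerivAt.hasDerivWithinAt ?_⟩
  have hagree : (fun r ↦ γ r r) =ᶠ[𝓝 t] γ t := by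
    filter_upwards [hnhds t ht] with r hr
    have hrI : r ∈ I := hsub t ht hr
    exact eqOn_of_isIntegralCurveOn_of_lipschitzWith (ordConnected_Icc.inter ordConnected_Icc)
      (hK.mono (inter_subset_left.trans (hsub r hrI)))
      (fun q hq ↦ hv q (hsub r hrI hq.1)) ⟨hmem r hrI, hmem t ht⟩
      ((hγ r hrI).mono inter_subset_left) ((hγ t ht).mono inter_subset_right)
      ((hγ₀ r hrI).trans (hγ₀ t ht).symm) ⟨mem_of_mem_nhds (hnhds r hrI), hr⟩
  exact ((hγ t ht t (mem_of_mem_nhds (hnhds t ht))).hasDerivAt (hnhds t ht)).congr_of_eventuallyEq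
    hagree

variable [CompleteSpace E]

theorem exists_isIntegralCurveOn_Icc_of_norm_le {c d : ℝ} {C M : ℝ≥0} (ht₀ : t₀ ∈ Icc c d)
    (hlip : ∀ t ∈ Icc c d, LipschitzWith C (v t)) (hcont : ∀ x, ContinuousOn (v · x) (Icc c d))
    (hnorm : ∀ t ∈ Icc c d, ∀ x, ‖v t x‖ ≤ M) :
    ∃ γ : ℝ → E, γ t₀ = x₀ ∧ IsIntegralCurveOn γ v (Icc c d) := by
  -- A bounded field keeps solutions in a ball of radius `M` times the elapsed time.
  have hpl : IsPicardLindelof v (⟨t₀, ht₀⟩ : Icc c d) x₀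
      (M * (max (d - t₀) (t₀ - c)).toNNReal) 0 M C :=
    { lipschitzOnWith := fun t ht ↦ (hlip t ht).lipschitzOnWith
      continuousOn := fun x _ ↦ hcont x
      norm_le := fun t ht x _ ↦ hnorm t ht x
      mul_max_le := by
        rw [NNReal.coe_mul, Real.coe_toNNReal _ (le_max_of_le_left (sub_nonneg.2 ht₀.2)),
          NNReal.coe_zero, sub_zero] }
  exact hpl.exists_eq_forall_mem_Icc_hasDerivWithinAt₀

theorem exists_isIntegralCurveOn_of_norm_le (hI : IsOpen I) (hI' : I.OrdConnected)
    (hK : ContinuousOn K I) (hv : ∀ t ∈ I, LipschitzWith (K t) (v t))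
    (hcont : ∀ x, ContinuousOn (v · x) I) (hL : ContinuousOn L I)
    (hnorm : ∀ t ∈ I, ∀ x, ‖v t x‖ ≤ L t) (ht₀ : t₀ ∈ I) :
    ∃ γ : ℝ → E, γ t₀ = x₀ ∧ IsIntegralCurveOn γ v I := by
  refine exists_isIntegralCurveOn_of_forall_Icc hI hI' hK hv ht₀ fun c d hmem hsub ↦ ?_
  obtain ⟨C, hC⟩ := isCompact_Icc.bddAbove_image (hK.mono hsub)
  obtain ⟨M, hM⟩ := isCompact_Icc.bddAbove_image (hL.mono hsub)
  exact exists_isIntegralCurveOn_Icc_of_norm_le hmem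
    (fun t ht ↦ (hv t (hsub ht)).weaken (hC (mem_image_of_mem K ht)))
    (fun x ↦ (hcont x).mono hsub)
    (fun t ht x ↦ (hnorm t (hsub ht) x).trans (hM (mem_image_of_mem L ht)))

end GlobalExistence

section Tanh

theorem hasDerivAt_tanh (x : ℝ) : HasDerivAt Real.tanh (1 - Real.tanh x ^ 2) x := by
  have hcosh : Real.cosh x ≠ 0 := (Real.cosh_pos x).ne'
  rw [show Real.tanh = Real.sinh / Real.cosh from funext Real.tanh_eq_sinh_div_cosh]
  refine ((Real.hasDerivAt_sinh x).div (Real.hasDerivAt_cosh x) hcosh).congr_deriv ?_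
  rw [Pi.div_apply]
  field_simp

theorem tanh_mem_Ioo (x : ℝ) : Real.tanh x ∈ Ioo (-1 : ℝ) 1 :=
  ⟨Real.neg_one_lt_tanh x, Real.tanh_lt_one x⟩

theorem lipschitzWith_one_tanh : LipschitzWith 1 Real.tanh := by
  refine lipschitzWith_of_nnnorm_deriv_le (fun x ↦ (hasDerivAt_tanh x).differentiableAt) fun x ↦ ?_
  rw [(hasDerivAt_tanh x).deriv, ← NNReal.coe_le_coe, coe_nnnorm, Real.norm_eq_abs, NNReal.coe_one,
    abs_le]
  constructor <;> linarith [sq_nonneg (Real.tanh x), Real.tanh_sq_lt_one x]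

end Tanh

section Primitive

variable {E : Type*} [NormedAddCommGroup E] [NormedSpace ℝ E] {I : Set ℝ}

theorem exists_forall_hasDerivAt_of_continuousOn [CompleteSpace E] {w : ℝ → E}
    (hw : ContinuousOn w I) (hI : IsOpen I) (hI' : I.OrdConnected) {t₀ : ℝ} (ht₀ : t₀ ∈ I)
    (x₀ : E) : ∃ f : ℝ → E, f t₀ = x₀ ∧ ∀ t ∈ I, HasDerivAt f (w t) t := by
  refine ⟨fun t ↦ x₀ + ∫ r in t₀..t, w r, by simp, fun t ht ↦ ?_⟩
  exact (intervalIntegral.integral_hasDerivAt_right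
    (hw.mono (hI'.uIcc_subset ht₀ ht)).intervalIntegrable
    (hw.stronglyMeasurableAtFilter hI t ht) (hw.continuousAt (hI.mem_nhds ht))).const_add x₀

theorem contDiffOn_add_one_of_hasDerivAt {n : ℕ∞} {f f' : ℝ → E} (hI : IsOpen I)
    (hf : ∀ t ∈ I, HasDerivAt f (f' t) t) (hf' : ContDiffOn ℝ n f' I) :
    ContDiffOn ℝ (n + 1) f I :=
  (contDiffOn_succ_iff_deriv_of_isOpen hI).2
    ⟨fun t ht ↦ (hf t ht).differentiableAt.differentiableWithinAt, by simp,
      hf'.congr fun t ht ↦ (hf t ht).deriv⟩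

end Primitive

theorem exists_isIntegralCurveOn_one_sub_sq_mul {I : Set ℝ} (hI : IsOpen I)
    (hI' : I.OrdConnected) {g : ℝ → ℝ → ℝ} {K : ℝ → ℝ≥0} (hK : ContinuousOn K I)
    (hlip : ∀ t ∈ I, LipschitzOnWith (K t) (g t) (Ioo (-1) 1))
    (hcont : ∀ x ∈ Ioo (-1 : ℝ) 1, ContinuousOn (g · x) I) {t₀ : ℝ} (ht₀ : t₀ ∈ I)
    {x₀ : ℝ} (hx₀ : x₀ ∈ Ioo (-1 : ℝ) 1) :
    ∃ w : ℝ → ℝ, w t₀ = x₀ ∧ MapsTo w I (Ioo (-1) 1) ∧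
      IsIntegralCurveOn w (fun t x ↦ (1 - x ^ 2) * g t x) I := by
  have hlip_tanh : ∀ t ∈ I, LipschitzWith (K t) fun u ↦ g t (Real.tanh u) := fun t ht ↦ by
    simpa only [mul_one, lipschitzOnWith_univ, Function.comp_def] using
      (hlip t ht).comp lipschitzWith_one_tanh.lipschitzOnWith fun u (_ : u ∈ univ) ↦ tanh_mem_Ioo u
  have hzero : (0 : ℝ) ∈ Ioo (-1 : ℝ) 1 := by norm_num
  have hnorm : ∀ t ∈ I, ∀ u, ‖g t (Real.tanh u)‖ ≤ (‖g t 0‖₊ + K t : ℝ≥0) := fun t ht u ↦ by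
    calc ‖g t (Real.tanh u)‖
      _ ≤ ‖g t 0‖ + ‖g t (Real.tanh u) - g t 0‖ := norm_le_norm_add_norm_sub' _ _
      _ ≤ ‖g t 0‖ + K t * ‖Real.tanh u - 0‖ := by
        gcongr
        exact (hlip t ht).norm_sub_le (tanh_mem_Ioo u) hzero
      _ ≤ ‖g t 0‖ + K t * 1 := by
        gcongr
        simpa using (Real.abs_tanh_lt_one u).le
      _ = (‖g t 0‖₊ + K t : ℝ≥0) := by simp
  obtain ⟨u, hu₀, hu⟩ := exists_isIntegralCurveOn_of_norm_le (x₀ := Real.artanh x₀) hI hI' hK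
    hlip_tanh (fun u ↦ hcont _ (tanh_mem_Ioo u)) ((hcont 0 hzero).nnnorm.add hK) hnorm ht₀
  refine ⟨fun t ↦ Real.tanh (u t), ?_, fun t _ ↦ tanh_mem_Ioo (u t), fun t ht ↦ ?_⟩
  · simp only [hu₀, Real.tanh_artanh hx₀]
  · exact (hasDerivAt_tanh (u t)).comp_hasDerivWithinAt t (hu t ht)

theorem lipschitzWith_const_mul_one_sub_mul (c b : ℝ) :
    LipschitzWith (‖c‖₊ * ‖b‖₊) fun x : ℝ ↦ c * (1 - x * b) :=
  LipschitzWith.of_dist_le_mul fun x y ↦ by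
    have hdiff : c * (1 - x * b) - c * (1 - y * b) = -(c * b * (x - y)) := by ring
    simp [Real.dist_eq, hdiff, abs_mul]

theorem stmt_2_general {I : Set ℝ} (hI : IsOpen I) (hI' : I.OrdConnected) (c : ℝ) {h : ℝ → ℝ}
    (hh : ContinuousOn h I) {s₀ : ℝ} (hs₀ : s₀ ∈ I) (f₀ : ℝ) {f₁ : ℝ}
    (hf₁ : f₁ ∈ Ioo (-1 : ℝ) 1) :
    ∃ f : ℝ → ℝ, ContDiffOn ℝ 2 f I ∧ f s₀ = f₀ ∧ deriv f s₀ = f₁ ∧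
      (∀ s ∈ I, deriv f s ∈ Ioo (-1 : ℝ) 1) ∧
      ∀ s ∈ I, deriv (deriv f) s = c * (1 - deriv f s ^ 2) * (1 - deriv f s * h s) := by
  obtain ⟨w, hw₀, hmaps, hw⟩ := exists_isIntegralCurveOn_one_sub_sq_mul hI hI'
    (g := fun s x ↦ c * (1 - x * h s)) (continuousOn_const.mul hh.nnnorm)
    (fun s _ ↦ (lipschitzWith_const_mul_one_sub_mul c (h s)).lipschitzOnWith)
    (fun x _ ↦ by fun_prop) hs₀ hf₁
  have hwd : ∀ s ∈ I, HasDerivAt w ((1 - w s ^ 2) * (c * (1 - w s * h s))) s :=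
    fun s hs ↦ (hw s hs).hasDerivAt (hI.mem_nhds hs)
  have hwc : ContinuousOn w I := hw.continuousOn
  obtain ⟨f, hf₀, hf⟩ := exists_forall_hasDerivAt_of_continuousOn hwc hI hI' hs₀ f₀
  have hderiv : EqOn (deriv f) w I := fun s hs ↦ (hf s hs).deriv
  have hw_C1 : ContDiffOn ℝ 1 w I := by
    simpa using contDiffOn_add_one_of_hasDerivAt (n := 0) hI hwd
      (contDiffOn_zero.2 (by fun_prop))
  have hf_C2 : ContDiffOn ℝ 2 f I := by
    simpa [one_add_one_eq_two] using
      contDiffOn_add_one_of_hasDerivAt (n := 1) hI hf (by simpa using hw_C1)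
  refine ⟨f, hf_C2, hf₀, (hderiv hs₀).trans hw₀, fun s hs ↦ hderiv hs ▸ hmaps hs, fun s hs ↦ ?_⟩
  rw [(hderiv.eventuallyEq_of_mem (hI.mem_nhds hs)).deriv_eq, (hwd s hs).deriv, hderiv hs]
  ring

/-- Global existence of solutions of the translating-soliton ODE when ε·ε̃ = −1. -/
theorem stmt_2 (εt : ℝ) (hεt : εt = 1 ∨ εt = -1) (a b : ℝ) (h : ℝ → ℝ)
    (hh : ContDiffOn ℝ 1 h (Set.Ioo a b))
    (s₀ : ℝ) (hs₀ : s₀ ∈ Set.Ioo a b) (f₀ : ℝ) (f₁ : ℝ) (hf₁ : f₁ ∈ Set.Ioo (-1 : ℝ) 1) :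
    ∃ f : ℝ → ℝ, ContDiffOn ℝ 2 f (Set.Ioo a b) ∧
      f s₀ = f₀ ∧ deriv f s₀ = f₁ ∧
      (∀ s ∈ Set.Ioo a b, deriv f s ∈ Set.Ioo (-1 : ℝ) 1) ∧
      ∀ s ∈ Set.Ioo a b,
        deriv (deriv f) s = εt * (1 - (deriv f s) ^ 2) * (1 - deriv f s * h s) :=
  stmt_2_general isOpen_Ioo ordConnected_Ioo εt hh.continuousOn hs₀ f₀ hf₁
end

section
/- Let n ≥ 2 be an integer and a ∈ ℝ. There exists a function f : ℝ → ℝ which is infinitely differentiable on [0, +∞) (i.e., ContDiffOn of every order on the closed half-line), with f(0) = a and f'(0) = 0, and such that for every s > 0, f''(s) = (1 + f'(s)²)·(1 − (n−1)·f'(s)/s). -/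
/-!
Substituting `f' = s w` turns the equation into `s w' = s² g(w) + n (1/n - w)` with
`g(x) = x² (1 - (n-1) x)`. Inverting `w ↦ s w' + n w`, which amounts to averaging dilates, gives
`w = 1/n + s² ∫₀¹ t^(n+1) g(w(st)) dt`. For Lipschitz `g` the right-hand side is a contraction in
a norm weighted by a Gaussian, and it gains one derivative, also at `s = 0`. The cubic `g` is
first truncated outside `[0, 1/(n-1)]`; since `g` vanishes at both ends, they are barriers for
the solution, which therefore solves the original equation.
-/

open Function Set
open scoped BoundedContinuousFunction ContDiff NNReal

section DilationAverage

variable {E : Type*} [NormedAddCommGroup E] [NormedSpace ℝ E]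

/-- The average of the dilates `h (s * ·)` over `[0, 1]` with weight `φ`. For `φ t = t ^ p` it
inverts the Euler operator `u ↦ s u' + (p + 1) u`. -/
noncomputable def dilationAverage (φ : ℝ → ℝ) (h : ℝ → E) (s : ℝ) : E :=
  ∫ t in (0 : ℝ)..1, φ t • h (s * t)

lemma continuous_dilationAverage {φ : ℝ → ℝ} {h : ℝ → E} (hφ : Continuous φ) (hh : Continuous h) :
    Continuous (dilationAverage φ h) :=
  intervalIntegral.continuous_parametric_intervalIntegral_of_continuous'
    (by simp only [uncurry_def]; fun_prop) 0 1

lemma dilationAverage_sub {φ : ℝ → ℝ} {g h : ℝ → E} (hφ : Continuous φ) (hg : Continuous g)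
    (hh : Continuous h) (s : ℝ) :
    dilationAverage φ (g - h) s = dilationAverage φ g s - dilationAverage φ h s := by
  simp only [dilationAverage, Pi.sub_apply, smul_sub]
  exact intervalIntegral.integral_sub (Continuous.intervalIntegrable (by fun_prop) 0 1)
    (Continuous.intervalIntegrable (by fun_prop) 0 1)

lemma hasDerivAt_dilationAverage {φ : ℝ → ℝ} {h : ℝ → E} (hφ : Continuous φ) (hh : ContDiff ℝ 1 h)
    (s : ℝ) :
    HasDerivAt (dilationAverage φ h) (dilationAverage (fun t => t * φ t) (deriv h) s) s := by
  have hh₀ : Continuous h := hh.continuous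
  have : Continuous (deriv h) := hh.continuous_deriv le_rfl
  obtain ⟨C, hC⟩ := ((isCompact_closedBall s 1).prod
    (isCompact_Icc (a := (0 : ℝ)) (b := 1))).exists_bound_of_continuousOn
      (f := fun z => (z.2 * φ z.2) • deriv h (z.1 * z.2)) (by fun_prop)
  refine (intervalIntegral.hasDerivAt_integral_of_dominated_loc_of_deriv_le
    (F' := fun x t => (t * φ t) • deriv h (x * t)) (bound := fun _ => C)
    (Metric.closedBall_mem_nhds s one_pos) (.of_forall fun x => ?_)
    (Continuous.intervalIntegrable (by fun_prop) 0 1) ?_ (.of_forall fun t ht x hx => ?_)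
    (by simp) (.of_forall fun t _ x _ => ?_)).2
  · exact Continuous.aestronglyMeasurable (by fun_prop)
  · exact Continuous.aestronglyMeasurable (by fun_prop)
  · rw [uIoc_of_le zero_le_one] at ht
    exact hC (x, t) ⟨hx, Ioc_subset_Icc_self ht⟩
  · have hcomp : HasDerivAt (fun x => h (x * t)) (t • deriv h (x * t)) x :=
      (hh.differentiable one_ne_zero _).hasDerivAt.scomp x (hasDerivAt_mul_const t)
    simpa only [smul_smul, mul_comm] using hcomp.fun_const_smul (φ t)

lemma contDiff_dilationAverage {φ : ℝ → ℝ} {h : ℝ → E} {k : ℕ} (hφ : Continuous φ)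
    (hh : ContDiff ℝ k h) : ContDiff ℝ k (dilationAverage φ h) := by
  induction k generalizing φ h with
  | zero => exact contDiff_zero.2 (continuous_dilationAverage hφ (contDiff_zero.1 hh))
  | succ k ih =>
    have hderiv := hasDerivAt_dilationAverage hφ (hh.of_le (by norm_cast; lia))
    push_cast at hh ⊢
    rw [contDiff_succ_iff_deriv] at hh ⊢
    refine ⟨fun s => (hderiv s).differentiableAt, by simp, ?_⟩
    rw [funext fun s => (hderiv s).deriv]
    exact ih (by fun_prop) hh.2.2

section SmulDilationAverage

variable [CompleteSpace E] {φ : ℝ → ℝ} {h : ℝ → E}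

-- Moving the derivative onto `φ` lets `h` be merely continuous and treats `s = 0` like any point.
lemma smul_dilationAverage_eq_sub (hφ : ContDiff ℝ 1 φ) (hh : Continuous h) (s : ℝ) :
    s • dilationAverage φ h s =
      φ 1 • (∫ r in (0 : ℝ)..s, h r) -
        dilationAverage (deriv φ) (fun x => ∫ r in (0 : ℝ)..x, h r) s := by
  have hprim (t : ℝ) :
      HasDerivAt (fun t => ∫ r in (0 : ℝ)..(s * t), h r) (s • h (s * t)) t :=
    (hh.integral_hasStrictDerivAt 0 (s * t)).hasDerivAt.scomp t (hasDerivAt_const_mul s)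
  have hφ' : Continuous (deriv φ) := hφ.continuous_deriv le_rfl
  have hparts := intervalIntegral.integral_smul_deriv_eq_deriv_smul (a := 0) (b := 1)
    (fun t _ => (hφ.differentiable one_ne_zero t).hasDerivAt) (fun t _ => hprim t)
    (hφ'.intervalIntegrable 0 1) (Continuous.intervalIntegrable (by fun_prop) 0 1)
  simpa [dilationAverage, ← intervalIntegral.integral_smul, smul_comm s] using hparts

lemma hasDerivAt_smul_dilationAverage (hφ : ContDiff ℝ 1 φ) (hh : Continuous h) (s : ℝ) :
    HasDerivAt (fun s => s • dilationAverage φ h s)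
      (φ 1 • h s - dilationAverage (fun t => t * deriv φ t) h s) s := by
  have hprim (x : ℝ) : HasDerivAt (fun x => ∫ r in (0 : ℝ)..x, h r) (h x) x :=
    (hh.integral_hasStrictDerivAt 0 x).hasDerivAt
  have hprim_deriv : deriv (fun x => ∫ r in (0 : ℝ)..x, h r) = h :=
    funext fun x => (hprim x).deriv
  have hprim_contDiff : ContDiff ℝ 1 (fun x => ∫ r in (0 : ℝ)..x, h r) :=
    contDiff_one_iff_deriv.2 ⟨fun x => (hprim x).differentiableAt, by rwa [hprim_deriv]⟩
  have haverage := hasDerivAt_dilationAverage (hφ.continuous_deriv le_rfl) hprim_contDiff s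
  rw [hprim_deriv] at haverage
  simpa only [smul_dilationAverage_eq_sub hφ hh] using
    ((hprim s).fun_const_smul (φ 1)).fun_sub haverage

lemma contDiff_smul_dilationAverage {k : ℕ} (hφ : ContDiff ℝ 1 φ) (hh : ContDiff ℝ k h) :
    ContDiff ℝ (k + 1) (fun s => s • dilationAverage φ h s) := by
  have hderiv := hasDerivAt_smul_dilationAverage hφ hh.continuous
  have : Continuous (deriv φ) := hφ.continuous_deriv le_rfl
  refine contDiff_succ_iff_deriv.2 ⟨fun s => (hderiv s).differentiableAt, by simp, ?_⟩
  rw [funext fun s => (hderiv s).deriv]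
  exact (hh.const_smul (φ 1)).sub (contDiff_dilationAverage (by fun_prop) hh)

end SmulDilationAverage

lemma contDiff_one_rpow_const {p : ℝ} (hp : 1 ≤ p) : ContDiff ℝ 1 (fun t : ℝ => t ^ p) :=
  mod_cast Real.contDiff_rpow_const_of_le (n := 1) (by simpa using hp)

lemma hasDerivAt_smul_dilationAverage_rpow [CompleteSpace E] {h : ℝ → E} {p : ℝ} (hp : 1 ≤ p)
    (hh : Continuous h) (s : ℝ) :
    HasDerivAt (fun s => s • dilationAverage (· ^ p) h s)
      (h s - p • dilationAverage (· ^ p) h s) s := by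
  have hpow := contDiff_one_rpow_const hp
  convert hasDerivAt_smul_dilationAverage hpow hh s using 1
  have heuler : EqOn (fun t : ℝ => p • t ^ p • h (s * t))
      (fun t => (t * deriv (fun t : ℝ => t ^ p) t) • h (s * t)) (uIcc 0 1) := by
    intro t ht
    rw [uIcc_of_le zero_le_one] at ht
    have hmul : t * (p * t ^ (p - 1)) = p * t ^ p := by
      rw [mul_left_comm, ← Real.rpow_one_add' ht.1 (by linarith), add_sub_cancel]
    simp only [(Real.hasDerivAt_rpow_const (Or.inr hp)).deriv, hmul, smul_smul]
  simp only [dilationAverage, ← intervalIntegral.integral_smul,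
    intervalIntegral.integral_congr heuler, Real.one_rpow, one_smul]

lemma norm_sq_smul_dilationAverage_le {φ : ℝ → ℝ} {h : ℝ → E} {A β : ℝ}
    (hφ : ∀ t ∈ Icc (0 : ℝ) 1, |φ t| ≤ t) (hβ : 0 < β)
    (hh : ∀ r, ‖h r‖ ≤ A * Real.exp (β * r ^ 2)) (s : ℝ) :
    ‖s ^ 2 • dilationAverage φ h s‖ ≤ A / (2 * β) * Real.exp (β * s ^ 2) := by
  have hA : 0 ≤ A := by simpa using (norm_nonneg _).trans (hh 0)
  have hprim (t : ℝ) : HasDerivAt (fun t => A / (2 * β) * Real.exp (β * (s * t) ^ 2))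
      (s ^ 2 * (A * (t * Real.exp (β * (s * t) ^ 2)))) t := by
    refine (((hasDerivAt_const_mul s).fun_pow 2).const_mul β).exp.const_mul (A / (2 * β))
      |>.congr_deriv ?_
    push_cast
    field_simp
  have hintegrand : ∀ t ∈ Ioc (0 : ℝ) 1,
      ‖φ t • h (s * t)‖ ≤ A * (t * Real.exp (β * (s * t) ^ 2)) := fun t ht => by
    calc ‖φ t • h (s * t)‖ ≤ t * (A * Real.exp (β * (s * t) ^ 2)) := by
          rw [norm_smul]
          exact mul_le_mul (hφ t (Ioc_subset_Icc_self ht)) (hh _) (norm_nonneg _) ht.1.le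
      _ = A * (t * Real.exp (β * (s * t) ^ 2)) := mul_left_comm _ _ _
  calc ‖s ^ 2 • dilationAverage φ h s‖
      ≤ s ^ 2 * ∫ t in (0 : ℝ)..1, A * (t * Real.exp (β * (s * t) ^ 2)) := by
        rw [norm_smul, Real.norm_of_nonneg (sq_nonneg s)]
        gcongr
        exact intervalIntegral.norm_integral_le_of_norm_le zero_le_one (.of_forall hintegrand)
          (Continuous.intervalIntegrable (by fun_prop) 0 1)
    _ = A / (2 * β) * Real.exp (β * s ^ 2) - A / (2 * β) := by
        rw [← intervalIntegral.integral_const_mul,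
          intervalIntegral.integral_eq_sub_of_hasDerivAt (fun t _ => hprim t)
            (Continuous.intervalIntegrable (by fun_prop) 0 1)]
        simp
    _ ≤ A / (2 * β) * Real.exp (β * s ^ 2) := sub_le_self _ (by positivity)

/-- The integral form `w ↦ c + s² ∫₀¹ φ(t) G(w(st)) dt` of a singular initial value problem with
`w(0) = c`. For `φ t = t ^ p` its fixed points solve `s w' = s² G(w) + (p - 1)(c - w)`. -/
noncomputable def singularPicardMap (φ : ℝ → ℝ) (c : E) (G : E → E) (w : ℝ → E) (s : ℝ) : E :=
  c + s ^ 2 • dilationAverage φ (G ∘ w) s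

lemma exists_continuous_isFixedPt_of_weighted_contraction [CompleteSpace E] {X : Type*}
    [TopologicalSpace X] {ρ : X → ℝ} {T : (X → E) → X → E} {κ : ℝ≥0} {C : ℝ}
    (hρ : Continuous ρ) (hρ_pos : ∀ x, 0 < ρ x)
    (hT : ∀ w, Continuous w → Continuous (T w)) (hT_zero : ∀ x, ‖T 0 x‖ ≤ C * ρ x) (hκ : κ < 1)
    (hT_lip : ∀ v w A, Continuous v → Continuous w → (∀ x, ‖v x - w x‖ ≤ A * ρ x) →
      ∀ x, ‖T v x - T w x‖ ≤ κ * A * ρ x) :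
    ∃ w, Continuous w ∧ IsFixedPt T w := by
  -- Dividing by `ρ` turns the weighted estimates into a contraction of bounded functions.
  let lift (u : X →ᵇ E) : X → E := fun x => ρ x • u x
  have hlift (u) : Continuous (lift u) := hρ.smul u.continuous
  have hlift_lip (u v : X →ᵇ E) (x) : ‖lift u x - lift v x‖ ≤ dist u v * ρ x := by
    rw [← smul_sub, norm_smul, Real.norm_of_nonneg (hρ_pos x).le, mul_comm, ← dist_eq_norm]
    exact mul_le_mul_of_nonneg_right (u.dist_coe_le_dist x) (hρ_pos x).le
  have hnorm (x : X) (y : E) : ‖(ρ x)⁻¹ • y‖ = ‖y‖ / ρ x := by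
    rw [norm_smul, norm_inv, Real.norm_of_nonneg (hρ_pos x).le, inv_mul_eq_div]
  have hbound (u : X →ᵇ E) (x) : ‖(ρ x)⁻¹ • T (lift u) x‖ ≤ κ * dist u 0 + C := by
    have hzero : lift 0 = 0 := funext fun x => smul_zero _
    have hdiff := hT_lip _ _ _ (hlift u) (hlift 0) (hlift_lip u 0) x
    rw [hzero] at hdiff
    rw [hnorm, div_le_iff₀ (hρ_pos x), add_mul]
    exact (norm_le_norm_sub_add _ _).trans (add_le_add hdiff (hT_zero x))
  let Φ (u : X →ᵇ E) : X →ᵇ E := .ofNormedAddCommGroup (fun x => (ρ x)⁻¹ • T (lift u) x)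
    ((hρ.inv₀ fun x => (hρ_pos x).ne').smul (hT _ (hlift u))) _ (hbound u)
  have hΦ : ContractingWith κ Φ := by
    refine ⟨hκ, .of_dist_le_mul fun u v => ?_⟩
    refine (BoundedContinuousFunction.dist_le (by positivity)).2 fun x => ?_
    change dist ((ρ x)⁻¹ • T (lift u) x) ((ρ x)⁻¹ • T (lift v) x) ≤ _
    rw [dist_eq_norm, ← smul_sub, hnorm, div_le_iff₀ (hρ_pos x)]
    exact hT_lip _ _ _ (hlift u) (hlift v) (hlift_lip u v) x
  obtain ⟨u, hu, -⟩ := hΦ.exists_fixedPoint 0 (edist_ne_top _ _)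
  refine ⟨lift u, hlift u, funext fun x => ?_⟩
  change T (lift u) x = ρ x • u x
  rw [← DFunLike.congr_fun hu x]
  exact (smul_inv_smul₀ (hρ_pos x).ne' _).symm

section SingularPicardMap

variable {φ : ℝ → ℝ} {c : E} {G : E → E} {w : ℝ → E}

lemma norm_singularPicardMap_sub_le {v : ℝ → E} {A β : ℝ} {K : ℝ≥0} (hφ : Continuous φ)
    (hφ_le : ∀ t ∈ Icc (0 : ℝ) 1, |φ t| ≤ t) (hG : LipschitzWith K G) (hβ : 0 < β)
    (hv : Continuous v) (hw : Continuous w)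
    (hvw : ∀ r, ‖v r - w r‖ ≤ A * Real.exp (β * r ^ 2)) (s : ℝ) :
    ‖singularPicardMap φ c G v s - singularPicardMap φ c G w s‖ ≤
      K * A / (2 * β) * Real.exp (β * s ^ 2) := by
  rw [singularPicardMap, singularPicardMap, add_sub_add_left_eq_sub, ← smul_sub,
    ← dilationAverage_sub hφ (hG.continuous.comp hv) (hG.continuous.comp hw)]
  refine norm_sq_smul_dilationAverage_le hφ_le hβ (fun r => ?_) s
  calc ‖G (v r) - G (w r)‖ ≤ K * ‖v r - w r‖ := hG.norm_sub_le _ _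
    _ ≤ K * (A * Real.exp (β * r ^ 2)) := by gcongr; exact hvw r
    _ = K * A * Real.exp (β * r ^ 2) := (mul_assoc _ _ _).symm

lemma norm_singularPicardMap_zero_le {β : ℝ} (hφ : ∀ t ∈ Icc (0 : ℝ) 1, |φ t| ≤ t) (hβ : 0 < β)
    (s : ℝ) :
    ‖singularPicardMap φ c G 0 s‖ ≤ (‖c‖ + ‖G 0‖ / (2 * β)) * Real.exp (β * s ^ 2) := by
  have hexp (r : ℝ) : 1 ≤ Real.exp (β * r ^ 2) := Real.one_le_exp (by positivity)
  rw [add_mul]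
  refine (norm_add_le _ _).trans (add_le_add (le_mul_of_one_le_right (norm_nonneg c) (hexp s)) ?_)
  exact norm_sq_smul_dilationAverage_le hφ hβ
    (fun r => le_mul_of_one_le_right (norm_nonneg (G 0)) (hexp r)) s

lemma exists_continuous_isFixedPt_singularPicardMap [CompleteSpace E] {K : ℝ≥0}
    (hφ : Continuous φ) (hφ_le : ∀ t ∈ Icc (0 : ℝ) 1, |φ t| ≤ t) (c : E) (hG : LipschitzWith K G) :
    ∃ w, Continuous w ∧ IsFixedPt (singularPicardMap φ c G) w := by
  have hβ : (0 : ℝ) < K + 1 := by positivity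
  refine exists_continuous_isFixedPt_of_weighted_contraction (κ := 1 / 2)
    (ρ := fun s => Real.exp ((K + 1) * s ^ 2)) (by fun_prop) (fun s => Real.exp_pos _)
    (fun w hw => ?_) (norm_singularPicardMap_zero_le hφ_le hβ) (by norm_num)
    fun v w A hv hw hvw s => ?_
  · have := continuous_dilationAverage hφ (hG.continuous.comp hw)
    unfold singularPicardMap
    fun_prop
  · refine (norm_singularPicardMap_sub_le hφ hφ_le hG hβ hv hw hvw s).trans ?_
    have hA : 0 ≤ A := by simpa using (norm_nonneg _).trans (hvw 0)
    gcongr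
    rw [div_le_iff₀ (by positivity)]
    push_cast
    nlinarith

lemma singularPicardMap_eq_add_smul_smul :
    singularPicardMap φ c G w = fun s => c + s • s • dilationAverage φ (G ∘ w) s :=
  funext fun s => by rw [singularPicardMap, sq, mul_smul]

lemma contDiff_singularPicardMap [CompleteSpace E] {k : ℕ} (hφ : ContDiff ℝ 1 φ)
    (hG : ContDiff ℝ k G) (hw : ContDiff ℝ k w) :
    ContDiff ℝ (k + 1) (singularPicardMap φ c G w) := by
  rw [singularPicardMap_eq_add_smul_smul]
  exact contDiff_const.add (contDiff_id.smul (contDiff_smul_dilationAverage hφ (hG.comp hw)))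

lemma contDiff_of_isFixedPt_singularPicardMap [CompleteSpace E] (hφ : ContDiff ℝ 1 φ)
    (hG : ContDiff ℝ ∞ G) (hw : Continuous w) (hfix : IsFixedPt (singularPicardMap φ c G) w) :
    ContDiff ℝ ∞ w := by
  refine contDiff_infty.2 fun k => ?_
  induction k with
  | zero => exact contDiff_zero.2 hw
  | succ k ih =>
    rw [← hfix.eq]
    exact mod_cast contDiff_singularPicardMap hφ (hG.of_le (mod_cast le_top)) ih

lemma hasDerivAt_singularPicardMap_rpow [CompleteSpace E] {p : ℝ} (hp : 1 ≤ p)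
    (hG : Continuous G) (hw : Continuous w) (s : ℝ) :
    HasDerivAt (singularPicardMap (· ^ p) c G w)
      (s • (G (w s) - (p - 1) • dilationAverage (· ^ p) (G ∘ w) s)) s := by
  rw [singularPicardMap_eq_add_smul_smul]
  refine ((hasDerivAt_id s).fun_smul
    (hasDerivAt_smul_dilationAverage_rpow hp (hG.comp hw) s)).const_add c |>.congr_deriv ?_
  simp only [id, comp_apply]
  module

lemma smul_deriv_of_isFixedPt_singularPicardMap_rpow [CompleteSpace E] {p : ℝ} (hp : 1 ≤ p)
    (hG : Continuous G) (hw : Continuous w)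
    (hfix : IsFixedPt (singularPicardMap (· ^ p) c G) w) (s : ℝ) :
    s • deriv w s = s ^ 2 • G (w s) + (p - 1) • (c - w s) := by
  have hws : w s = c + s ^ 2 • dilationAverage (· ^ p) (G ∘ w) s := (congrFun hfix s).symm
  have hderiv := hasDerivAt_singularPicardMap_rpow (c := c) hp hG hw s
  rw [hfix.eq] at hderiv
  calc s • deriv w s
      = s ^ 2 • G (w s) + (p - 1) • (c - (c + s ^ 2 • dilationAverage (· ^ p) (G ∘ w) s)) := by
        rw [hderiv.deriv]
        module
    _ = s ^ 2 • G (w s) + (p - 1) • (c - w s) := by rw [← hws]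

end SingularPicardMap

end DilationAverage

-- Following `w` along the ray `t ↦ s * t` handles both signs of `s` at once.
lemma le_of_mul_deriv_neg_of_eq {w : ℝ → ℝ} {b : ℝ} (hw : Differentiable ℝ w) (h₀ : w 0 ≤ b)
    (hb : ∀ x, w x = b → x * deriv w x < 0) (s : ℝ) : w s ≤ b := by
  have hray (t : ℝ) : HasDerivAt (fun t => w (s * t)) (deriv w (s * t) * s) t :=
    (hw (s * t)).hasDerivAt.comp t (hasDerivAt_const_mul s)
  have hle := image_le_of_deriv_right_lt_deriv_boundary (a := 0) (b := 1) (B := fun _ => b)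
    (B' := 0) (fun t _ => (hray t).continuousAt.continuousWithinAt)
    (fun t _ => (hray t).hasDerivWithinAt) (by simpa using h₀) (fun t => hasDerivAt_const t b)
    (fun t ht hwt => ?_) (right_mem_Icc.2 zero_le_one)
  · simpa using hle
  · have hneg := hb _ hwt
    rw [mul_right_comm, mul_comm s, mul_comm] at hneg
    simp only [Pi.zero_apply]
    nlinarith [ht.1]

lemma exists_lipschitzWith_eqOn_Icc {g : ℝ → ℝ} {a b : ℝ} (hab : a ≤ b)
    (hg : ContDiffOn ℝ 1 g (Icc a b)) :
    ∃ K G, LipschitzWith K G ∧ EqOn G g (Icc a b) := by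
  obtain ⟨K, hK⟩ := hg.exists_lipschitzOnWith one_ne_zero (convex_Icc a b) isCompact_Icc
  exact ⟨K * 1, _, hK.to_restrict.comp (LipschitzWith.projIcc hab), fun x hx =>
    IccExtend_of_mem hab _ hx⟩

lemma mem_Icc_of_mul_deriv_eq {q c a b : ℝ} {G w : ℝ → ℝ} (hq : 0 < q) (hc : c ∈ Ioo a b)
    (hGa : 0 ≤ G a) (hGb : G b ≤ 0) (hw : Differentiable ℝ w)
    (hode : ∀ s, s * deriv w s = s ^ 2 * G (w s) + q * (c - w s)) (s : ℝ) : w s ∈ Icc a b := by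
  have hw₀ : w 0 = c := (sub_eq_zero.1 (by simpa [hq.ne'] using (hode 0).symm)).symm
  constructor
  · refine neg_le_neg_iff.1 (le_of_mul_deriv_neg_of_eq hw.neg
      (neg_le_neg (hc.1.le.trans_eq hw₀.symm)) (fun x hx => ?_) s)
    rw [deriv.neg, mul_neg, hode, neg_inj.1 hx]
    nlinarith [sq_nonneg x, mul_pos hq (sub_pos.2 hc.1)]
  · refine le_of_mul_deriv_neg_of_eq hw (hw₀.trans_le hc.2.le) (fun x hx => ?_) s
    rw [hode, hx]
    nlinarith [sq_nonneg x, mul_pos hq (sub_pos.2 hc.2)]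

theorem exists_contDiff_mul_deriv_eq {q c a b : ℝ} {g : ℝ → ℝ} (hq : 0 < q) (hc : c ∈ Ioo a b)
    (hg : ContDiff ℝ ∞ g) (hga : 0 ≤ g a) (hgb : g b ≤ 0) :
    ∃ w : ℝ → ℝ, ContDiff ℝ ∞ w ∧ (∀ s, w s ∈ Icc a b) ∧
      ∀ s, s * deriv w s = s ^ 2 * g (w s) + q * (c - w s) := by
  have hab : a ≤ b := (hc.1.trans hc.2).le
  have hp : 1 ≤ q + 1 := by linarith
  have hφ := contDiff_one_rpow_const hp
  have hφ_le : ∀ t ∈ Icc (0 : ℝ) 1, |t ^ (q + 1)| ≤ t := fun t ht => by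
    rw [abs_of_nonneg (Real.rpow_nonneg ht.1 _)]
    exact Real.rpow_le_self_of_le_one ht.1 ht.2 hp
  obtain ⟨K, G, hG, hGg⟩ :=
    exists_lipschitzWith_eqOn_Icc hab (hg.of_le (mod_cast le_top)).contDiffOn
  obtain ⟨w, hw, hfix⟩ := exists_continuous_isFixedPt_singularPicardMap hφ.continuous hφ_le c hG
  have hdiff : Differentiable ℝ w := fun s => by
    rw [← hfix.eq]
    exact (hasDerivAt_singularPicardMap_rpow hp hG.continuous hw s).differentiableAt
  have hode (s : ℝ) : s * deriv w s = s ^ 2 * G (w s) + q * (c - w s) := by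
    simpa using smul_deriv_of_isFixedPt_singularPicardMap_rpow hp hG.continuous hw hfix s
  have hmem : ∀ s, w s ∈ Icc a b :=
    mem_Icc_of_mul_deriv_eq hq hc (by rwa [hGg (left_mem_Icc.2 hab)])
      (by rwa [hGg (right_mem_Icc.2 hab)]) hdiff hode
  have hcomp : G ∘ w = g ∘ w := funext fun s => hGg (hmem s)
  have hfix_g : IsFixedPt (singularPicardMap (· ^ (q + 1)) c g) w := by
    unfold IsFixedPt singularPicardMap at hfix ⊢
    rwa [← hcomp]
  exact ⟨w, contDiff_of_isFixedPt_singularPicardMap hφ hg hw hfix_g, hmem,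
    fun s => hGg (hmem s) ▸ hode s⟩

lemma exists_contDiff_mul_deriv_add_eq {α : ℝ} (hα : 0 < α) :
    ∃ w : ℝ → ℝ, ContDiff ℝ ∞ w ∧
      ∀ s, s * deriv w s + w s = (1 + (s * w s) ^ 2) * (1 - α * w s) := by
  have hc : 1 / (α + 1) ∈ Ioo 0 (1 / α) :=
    ⟨by positivity, one_div_lt_one_div_of_lt hα (lt_add_one α)⟩
  obtain ⟨w, hw, -, hode⟩ := exists_contDiff_mul_deriv_eq (g := fun x => x ^ 2 * (1 - α * x))
    (q := α + 1) (by positivity) hc (by fun_prop) (by simp) (by simp [hα.ne'])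
  refine ⟨w, hw, fun s => ?_⟩
  rw [hode]
  field_simp
  ring

theorem exists_contDiff_translator_profile {α : ℝ} (hα : 0 < α) (a : ℝ) :
    ∃ f : ℝ → ℝ, ContDiff ℝ ∞ f ∧ f 0 = a ∧ deriv f 0 = 0 ∧
      ∀ s, s ≠ 0 → deriv (deriv f) s = (1 + deriv f s ^ 2) * (1 - α * deriv f s / s) := by
  obtain ⟨w, hw, hode⟩ := exists_contDiff_mul_deriv_add_eq hα
  let f (s : ℝ) : ℝ := a + ∫ r in (0 : ℝ)..s, r * w r
  have hcont : Continuous fun r => r * w r := continuous_id.mul hw.continuous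
  have hf (s : ℝ) : HasDerivAt f (s * w s) s :=
    (hcont.integral_hasStrictDerivAt 0 s).hasDerivAt.const_add a
  have hderiv : deriv f = fun s => s * w s := funext fun s => (hf s).deriv
  refine ⟨f, contDiff_infty_iff_deriv.2 ⟨fun s => (hf s).differentiableAt, ?_⟩, by simp [f],
    by simp [hderiv], fun s hs => ?_⟩
  · rw [hderiv]
    exact contDiff_id.mul hw
  · have hmul : HasDerivAt (fun s => s * w s) (1 * w s + s * deriv w s) s :=
      (hasDerivAt_id s).fun_mul (hw.differentiable (by simp) s).hasDerivAt
    calc deriv (deriv f) s = s * deriv w s + w s := by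
          rw [hderiv, hmul.deriv, one_mul, add_comm]
      _ = (1 + deriv f s ^ 2) * (1 - α * deriv f s / s) := by
          rw [hode, hderiv, mul_left_comm, mul_div_cancel_left₀ _ hs]

theorem stmt_3_general {α : ℝ} (hα : 0 < α) (a : ℝ) :
    ∃ f : ℝ → ℝ,
      (∀ k : ℕ, ContDiffOn ℝ k f (Ici 0)) ∧
      f 0 = a ∧ derivWithin f (Ici 0) 0 = 0 ∧
      ∀ s : ℝ, 0 < s →
        deriv (derivWithin f (Ici 0)) s =
          (1 + derivWithin f (Ici 0) s ^ 2) * (1 - α * derivWithin f (Ici 0) s / s) := by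
  obtain ⟨f, hf, hf₀, hf'₀, hode⟩ := exists_contDiff_translator_profile hα a
  have hderiv : EqOn (derivWithin f (Ici 0)) (deriv f) (Ici 0) := fun s hs =>
    (hf.differentiable (by simp) s).derivWithin (uniqueDiffOn_Ici 0 s hs)
  refine ⟨f, fun k => (contDiff_infty.1 hf k).contDiffOn, hf₀,
    (hderiv self_mem_Ici).trans hf'₀, fun s hs => ?_⟩
  rw [(hderiv.eventuallyEq_of_mem (Ici_mem_nhds hs)).deriv_eq, hderiv hs.le, hode s hs.ne']

/-- Existence of the rotationally symmetric translating soliton profile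
(translating paraboloid) in Euclidean space ℝ^{n+1}. -/
theorem stmt_3 (n : ℕ) (hn : 2 ≤ n) (a : ℝ) :
    ∃ f : ℝ → ℝ,
      (∀ k : ℕ, ContDiffOn ℝ k f (Set.Ici 0)) ∧
      f 0 = a ∧ derivWithin f (Set.Ici 0) 0 = 0 ∧
      ∀ s : ℝ, 0 < s →
        deriv (derivWithin f (Set.Ici 0)) s =
          (1 + (derivWithin f (Set.Ici 0) s) ^ 2) *
            (1 - ((n : ℝ) - 1) * derivWithin f (Set.Ici 0) s / s) := by
  exact stmt_3_general (sub_pos.2 (by exact_mod_cast hn)) a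
end

section
/- Let n ≥ 2 be an integer. There exist δ > 0 and a function w : ℝ → ℝ which is real-analytic on (−δ, δ) with w(0) = 0, such that for every s ∈ (−δ, δ), s·w'(s) = (1 − w(s)²)·(s − (n−1)·w(s)). -/
/-!
If `w` solves `s w' = F(s, w)` near `0` then, for each small `r`, the function `a t = w (r t)` on
`[0, 1]` solves `t a' = F(r t, a)`. Let `F(0, 0) = 0` and `∂F/∂w(0, 0) = -m` with `m > 0`, the
saddle condition, and put `N(s, w) = F(s, w) + m w`. Inverting the Euler operator `t d/dt + m`, the
rescaled equation becomes
  `a t = ∫₀¹ τ ^ (m - 1) N(r τ t, a (τ t)) dτ`,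
a fixed-point equation in `C([0, 1])` that depends analytically on `(r, a)` and whose right-hand
side has zero derivative in `a` at `(0, 0)`. The analytic implicit function theorem gives a unique
small solution `a = φ r`, analytic in `r`. Uniqueness forces `φ (τ r) t = φ r (τ t)`, so
`w r = φ r 1` satisfies `w (r t) = φ r t`: it solves the original equation, and it is analytic
because `φ` is.
-/

namespace BriotBouquet

open Filter Set intervalIntegral unitInterval
open scoped Topology ContDiff

section Superposition

variable {𝕜 E F K : Type*} [NontriviallyNormedField 𝕜] [NormedAddCommGroup E] [NormedSpace 𝕜 E]
  [NormedAddCommGroup F] [NormedSpace 𝕜 F] [TopologicalSpace K] [CompactSpace K]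

/-- The pointwise application `(a i)ᵢ ↦ (t ↦ q (a i t)ᵢ)` of a continuous multilinear map `q` to
continuous functions: the homogeneous terms of a superposition operator. -/
noncomputable def superpositionMultilinear {ι : Type*} [Fintype ι]
    (q : ContinuousMultilinearMap 𝕜 (fun _ : ι ↦ E) F) :
    ContinuousMultilinearMap 𝕜 (fun _ : ι ↦ C(K, E)) C(K, F) :=
  MultilinearMap.mkContinuous
    { toFun := fun a ↦ ⟨fun t ↦ q fun i ↦ a i t, by fun_prop⟩
      map_update_add' := fun a i b c ↦ by
        ext t
        simp only [ContinuousMap.coe_mk, ContinuousMap.add_apply,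
          Function.apply_update (fun _ (g : C(K, E)) ↦ g t), q.map_update_add]
      map_update_smul' := fun a i r b ↦ by
        ext t
        simp only [ContinuousMap.coe_mk, ContinuousMap.smul_apply,
          Function.apply_update (fun _ (g : C(K, E)) ↦ g t), q.map_update_smul] }
    ‖q‖ fun a ↦ (ContinuousMap.norm_le _ (by positivity)).2 fun t ↦
      q.le_opNorm_mul_prod_of_le fun i ↦ (a i).norm_coe_le_norm t

theorem norm_superpositionMultilinear_le {ι : Type*} [Fintype ι]
    (q : ContinuousMultilinearMap 𝕜 (fun _ : ι ↦ E) F) :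
    ‖(superpositionMultilinear q : ContinuousMultilinearMap 𝕜 (fun _ : ι ↦ C(K, E)) C(K, F))‖
      ≤ ‖q‖ :=
  MultilinearMap.mkContinuous_norm_le _ (norm_nonneg q) _

/-- The power series of the superposition operator `a ↦ f ∘ a`, where `p` is that of `f`. -/
noncomputable def superpositionSeries (p : FormalMultilinearSeries 𝕜 E F) :
    FormalMultilinearSeries 𝕜 C(K, E) C(K, F) :=
  fun n ↦ superpositionMultilinear (p n)

theorem radius_le_radius_superpositionSeries (p : FormalMultilinearSeries 𝕜 E F) :
    p.radius ≤ (superpositionSeries p : FormalMultilinearSeries 𝕜 C(K, E) C(K, F)).radius :=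
  FormalMultilinearSeries.radius_le_of_le fun n ↦ norm_superpositionMultilinear_le (p n)

theorem hasFDerivAt_superposition_apply {f : E → F} {f' : E →L[𝕜] F} {x : E}
    (hf : HasFDerivAt f f' x) {S : C(K, E) → C(K, F)} {S' : C(K, E) →L[𝕜] C(K, F)}
    (hS : HasFDerivAt S S' (.const K x))
    (hSf : ∀ᶠ a in 𝓝 (.const K x), ∀ t, S a t = f (a t)) (b : C(K, E)) (t : K) :
    S' b t = f' (b t) := by
  have hSt := (ContinuousMap.evalCLM 𝕜 t : C(K, F) →L[𝕜] F).hasFDerivAt.comp _ hS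
  have hft : HasFDerivAt (fun a : C(K, E) ↦ f (a t)) (f' ∘L ContinuousMap.evalCLM 𝕜 t)
      (.const K x) :=
    hf.comp (ContinuousMap.const K x) (ContinuousMap.evalCLM 𝕜 t : C(K, E) →L[𝕜] E).hasFDerivAt
  exact DFunLike.congr_fun
    (hSt.unique (hft.congr_of_eventuallyEq (hSf.mono fun a ha ↦ ha t))) b

variable [CompleteSpace F]

theorem superpositionSeries_sum_apply {p : FormalMultilinearSeries 𝕜 E F} {a : C(K, E)}
    (ha : a ∈ Metric.eball 0 p.radius) (t : K) :
    (superpositionSeries p).sum a t = p.sum (a t) := by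
  let q : FormalMultilinearSeries 𝕜 C(K, E) C(K, F) := superpositionSeries p
  have hsum : HasSum (fun n ↦ q n fun _ ↦ a) (q.sum a) :=
    q.hasSum (Metric.eball_subset_eball (radius_le_radius_superpositionSeries p) ha)
  have hsum_t : HasSum (fun n ↦ p n fun _ ↦ a t) ((superpositionSeries p).sum a t) :=
    hsum.mapL (ContinuousMap.evalCLM 𝕜 t)
  exact hsum_t.tsum_eq.symm

theorem exists_analyticAt_superposition {f : E → F} {x : E} (hf : AnalyticAt 𝕜 f x) :
    ∃ S : C(K, E) → C(K, F), AnalyticAt 𝕜 S (.const K x) ∧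
      ∀ᶠ a in 𝓝 (.const K x), ∀ t, S a t = f (a t) := by
  obtain ⟨p, r, hp⟩ := hf
  have hrad : 0 < p.radius := hp.r_pos.trans_le hp.r_le
  refine ⟨fun a ↦ (superpositionSeries p).sum (a - .const K x), ?_, ?_⟩
  · have hS := (superpositionSeries p : FormalMultilinearSeries 𝕜 C(K, E) C(K, F))
      |>.hasFPowerSeriesOnBall (hrad.trans_le (radius_le_radius_superpositionSeries p))
    simpa only [zero_add] using (hS.comp_sub (.const K x)).analyticAt
  · filter_upwards [Metric.eball_mem_nhds (ContinuousMap.const K x) hp.r_pos] with a ha t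
    have hsub : a - .const K x ∈ Metric.eball 0 r := by
      rwa [Metric.mem_eball, edist_zero_right, ← edist_eq_enorm_sub]
    have hsubt : a t - x ∈ Metric.eball 0 r := by
      rw [Metric.mem_eball, edist_zero_right] at hsub ⊢
      refine lt_of_le_of_lt ?_ hsub
      exact enorm_le_iff_norm_le.2 ((a - .const K x).norm_coe_le_norm t)
    rw [superpositionSeries_sum_apply (Metric.eball_subset_eball hp.r_le hsub)]
    simpa using (hp.sum hsubt).symm

end Superposition

section FixedPoint

variable {𝕜 P X : Type*} [RCLike 𝕜] [NormedAddCommGroup P] [NormedSpace 𝕜 P] [CompleteSpace P]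
  [NormedAddCommGroup X] [NormedSpace 𝕜 X] [CompleteSpace X]

theorem exists_analyticAt_fixedPoint {Ψ : P × X → X} {u : P × X} (hΨ : AnalyticAt 𝕜 Ψ u)
    (hu : Ψ u = u.2) (hΨ' : fderiv 𝕜 Ψ u ∘L .inr 𝕜 P X = 0) :
    ∃ φ : P → X, AnalyticAt 𝕜 φ u.1 ∧ φ u.1 = u.2 ∧
      ∀ᶠ p in 𝓝 u, Ψ p = p.2 ↔ φ p.1 = p.2 := by
  have hΦ : ContDiffAt 𝕜 ω (fun p ↦ p.2 - Ψ p) u := (analyticAt_snd.sub hΨ).contDiffAt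
  have hΦ' : fderiv 𝕜 (fun p ↦ p.2 - Ψ p) u ∘L .inr 𝕜 P X = .id 𝕜 X := by
    rw [fderiv_fun_sub differentiableAt_snd hΨ.differentiableAt, ContinuousLinearMap.sub_comp, hΨ',
      fderiv_snd, ContinuousLinearMap.snd_comp_inr, sub_zero]
  have hinv : (fderiv 𝕜 (fun p ↦ p.2 - Ψ p) u ∘L .inr 𝕜 P X).IsInvertible :=
    hΦ' ▸ ⟨.refl 𝕜 X, rfl⟩
  refine ⟨hΦ.implicitFunction (by simp) hinv,
    (hΦ.contDiffAt_implicitFunction (by simp) hinv).analyticAt,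
    hΦ.implicitFunction_apply_self (by simp) hinv, ?_⟩
  filter_upwards [hΦ.eventually_apply_eq_iff_implicitFunction (by simp) hinv] with p hp
  rw [← hp, hu, sub_self, sub_eq_zero, eq_comm]

end FixedPoint

section Averaging

theorem continuous_comp_mulLeft_projIcc {E : Type*} [TopologicalSpace E] (g : C(I, E)) :
    Continuous fun τ : ℝ ↦ g.comp (.mulLeft (projIcc 0 1 zero_le_one τ)) := by
  refine ContinuousMap.continuous_of_continuous_uncurry _ ?_
  exact g.continuous.comp ((continuous_projIcc.comp continuous_fst).mul continuous_snd)

variable {E : Type*} [NormedAddCommGroup E] [NormedSpace ℝ E] {m : ℝ}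

theorem intervalIntegrable_rpow_smul_comp_mulLeft (hm : 0 < m) (g : C(I, E)) :
    IntervalIntegrable
      (fun τ : ℝ ↦ τ ^ (m - 1) • g.comp (.mulLeft (projIcc 0 1 zero_le_one τ)))
      MeasureTheory.volume 0 1 :=
  (intervalIntegrable_rpow' (by linarith)).smul_continuousOn
    (continuous_comp_mulLeft_projIcc g).continuousOn

theorem norm_integral_rpow_smul_comp_mulLeft_le (hm : 0 < m) (g : C(I, E)) :
    ‖∫ τ in (0 : ℝ)..1, τ ^ (m - 1) • g.comp (.mulLeft (projIcc 0 1 zero_le_one τ))‖ ≤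
      (∫ τ in (0 : ℝ)..1, τ ^ (m - 1)) * ‖g‖ := by
  rw [← intervalIntegral.integral_mul_const]
  refine norm_integral_le_of_norm_le zero_le_one (.of_forall fun τ hτ ↦ ?_)
    ((intervalIntegrable_rpow' (by linarith)).mul_const _)
  rw [norm_smul, Real.norm_of_nonneg (Real.rpow_nonneg hτ.1.le _)]
  gcongr
  · exact Real.rpow_nonneg hτ.1.le _
  · exact (ContinuousMap.norm_le _ (norm_nonneg g)).2 fun t ↦ g.norm_coe_le_norm _

/-- The inverse of the Euler operator `t d/dt + m` on `[0, 1]`,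
namely `g ↦ (t ↦ ∫₀¹ τ ^ (m - 1) g(τ t) dτ)`. -/
noncomputable def eulerInverse (hm : 0 < m) : C(I, E) →L[ℝ] C(I, E) :=
  LinearMap.mkContinuous
    { toFun := fun g ↦
        ∫ τ in (0 : ℝ)..1, τ ^ (m - 1) • g.comp (.mulLeft (projIcc 0 1 zero_le_one τ))
      map_add' := fun g h ↦ by
        simp only [ContinuousMap.add_comp, smul_add]
        exact integral_add (intervalIntegrable_rpow_smul_comp_mulLeft hm g)
          (intervalIntegrable_rpow_smul_comp_mulLeft hm h)
      map_smul' := fun c g ↦ by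
        simp only [ContinuousMap.smul_comp, smul_comm _ c, integral_smul, RingHom.id_apply] }
    (∫ τ in (0 : ℝ)..1, τ ^ (m - 1)) (norm_integral_rpow_smul_comp_mulLeft_le hm)

variable [CompleteSpace E]

theorem eulerInverse_apply (hm : 0 < m) (g : C(I, E)) (t : I) :
    eulerInverse hm g t =
      ∫ τ in (0 : ℝ)..1, τ ^ (m - 1) • g (projIcc 0 1 zero_le_one τ * t) :=
  ((ContinuousMap.evalCLM ℝ t).intervalIntegral_comp_comm
    (intervalIntegrable_rpow_smul_comp_mulLeft hm g)).symm

theorem eulerInverse_comp_mulLeft (hm : 0 < m) (g : C(I, E)) (r : I) :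
    eulerInverse hm (g.comp (.mulLeft r)) = (eulerInverse hm g).comp (.mulLeft r) := by
  ext t
  simp only [eulerInverse_apply, ContinuousMap.comp_apply, ContinuousMap.coe_mulLeft,
    mul_left_comm]

theorem eulerInverse_apply_eq_integral (hm : 0 < m) (g : C(I, E)) {t : I} (ht : 0 < (t : ℝ)) :
    eulerInverse hm g t =
      (t : ℝ) ^ (-m) • ∫ x in (0 : ℝ)..t, x ^ (m - 1) • g (projIcc 0 1 zero_le_one x) := by
  have hcongr : ∀ τ ∈ uIcc (0 : ℝ) 1, τ ^ (m - 1) • g (projIcc 0 1 zero_le_one τ * t) =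
      (t : ℝ) ^ (1 - m) •
        ((τ * t) ^ (m - 1) • g (projIcc 0 1 zero_le_one (τ * t))) := fun τ hτ ↦ by
    rw [uIcc_of_le zero_le_one] at hτ
    have hproj : projIcc 0 1 zero_le_one τ * t = projIcc 0 1 zero_le_one (τ * t) := by
      rw [projIcc_of_mem _ hτ, projIcc_of_mem _ (mul_mem hτ t.2)]
      rfl
    have hpow : (t : ℝ) ^ (1 - m) * (t : ℝ) ^ (m - 1) = 1 := by
      rw [← Real.rpow_add ht, sub_add_sub_cancel', sub_self, Real.rpow_zero]
    rw [hproj, smul_smul, Real.mul_rpow hτ.1 ht.le, mul_left_comm, hpow, mul_one]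
  rw [eulerInverse_apply, integral_congr hcongr, integral_smul,
    integral_comp_mul_right (fun x ↦ x ^ (m - 1) • g (projIcc 0 1 zero_le_one x)) ht.ne',
    zero_mul, one_mul, smul_smul, ← Real.rpow_neg_one, ← Real.rpow_add ht]
  ring_nf

theorem hasDerivAt_rpow_neg_smul_integral (hm : 0 < m) {h : ℝ → E} (hh : Continuous h) {t : ℝ}
    (ht : 0 < t) :
    HasDerivAt (fun t : ℝ ↦ t ^ (-m) • ∫ x in (0 : ℝ)..t, x ^ (m - 1) • h x)
      (t⁻¹ • (h t - m • t ^ (-m) • ∫ x in (0 : ℝ)..t, x ^ (m - 1) • h x)) t := by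
  have hint : IntervalIntegrable (fun x : ℝ ↦ x ^ (m - 1) • h x) MeasureTheory.volume 0 t :=
    (intervalIntegrable_rpow' (by linarith)).smul_continuousOn hh.continuousOn
  have hcont : ContinuousOn (fun x : ℝ ↦ x ^ (m - 1) • h x) (Ioi 0) := fun x hx ↦
    ((Real.continuousAt_rpow_const _ _ (.inl (ne_of_gt hx))).smul
      hh.continuousAt).continuousWithinAt
  have hprim : HasDerivAt (fun t : ℝ ↦ ∫ x in (0 : ℝ)..t, x ^ (m - 1) • h x)
      (t ^ (m - 1) • h t) t :=
    integral_hasDerivAt_right hint (hcont.stronglyMeasurableAtFilter isOpen_Ioi t ht)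
      (hcont.continuousAt (Ioi_mem_nhds ht))
  have hpow₁ : t ^ (-m) * t ^ (m - 1) = t⁻¹ := by
    rw [← Real.rpow_add ht, ← Real.rpow_neg_one]
    ring_nf
  have hpow₂ : t ^ (-m - 1) = t⁻¹ * t ^ (-m) := by
    rw [Real.rpow_sub_one ht.ne', div_eq_inv_mul]
  convert! (Real.hasDerivAt_rpow_const (.inl ht.ne')).smul hprim using 1
  rw [smul_smul _ _ (h t), hpow₁, hpow₂]
  module

theorem hasDerivWithinAt_eulerInverse (hm : 0 < m) (g : C(I, E)) {t : I} (ht : 0 < (t : ℝ)) :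
    HasDerivWithinAt (IccExtend zero_le_one (eulerInverse hm g))
      ((t : ℝ)⁻¹ • (g t - m • eulerInverse hm g t)) (Icc 0 1) t := by
  have hderiv := hasDerivAt_rpow_neg_smul_integral hm
    (g.continuous.comp (continuous_projIcc (h := zero_le_one))) ht
  simp only [Function.comp_apply, projIcc_val, ← eulerInverse_apply_eq_integral hm g ht] at hderiv
  refine hderiv.hasDerivWithinAt.congr_of_eventuallyEq_of_mem ?_ t.2
  filter_upwards [self_mem_nhdsWithin, mem_nhdsWithin_of_mem_nhds (Ioi_mem_nhds ht)] with s hs hs0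
  rw [IccExtend_of_mem _ _ hs, eulerInverse_apply_eq_integral hm g (t := ⟨s, hs⟩) hs0]

end Averaging

section Dilation

variable {E : Type*} [NormedAddCommGroup E]

/-- The action of dilations on rescaled functions: if `a t = w (r t)`, then `dilate τ (r, a)` is
the pair `(τ r, b)` with `b t = w (τ r t)`. -/
def dilate (τ : I) (p : ℝ × C(I, E)) : ℝ × C(I, E) :=
  (τ * p.1, p.2.comp (.mulLeft τ))

theorem norm_dilate_le (τ : I) (p : ℝ × C(I, E)) : ‖dilate τ p‖ ≤ ‖p‖ := by
  refine max_le_max ?_ ?_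
  · rw [dilate, norm_mul, Real.norm_of_nonneg τ.2.1]
    exact mul_le_of_le_one_left (norm_nonneg _) τ.2.2
  · exact (ContinuousMap.norm_le _ (norm_nonneg _)).2 fun t ↦ p.2.norm_coe_le_norm _

theorem eventually_forall_dilate {Q : ℝ × C(I, E) → Prop} (hQ : ∀ᶠ p in 𝓝 0, Q p) :
    ∀ᶠ p in 𝓝 0, ∀ τ, Q (dilate τ p) := by
  rw [Metric.eventually_nhds_iff_ball] at hQ ⊢
  obtain ⟨ε, hε, hball⟩ := hQ
  refine ⟨ε, hε, fun p hp τ ↦ hball _ ?_⟩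
  rw [mem_ball_zero_iff] at hp ⊢
  exact (norm_dilate_le τ p).trans_lt hp

theorem eventually_apply_mul_eq_comp_mulLeft {Ψ : ℝ × C(I, E) → C(I, E)} {φ : ℝ → C(I, E)}
    (hφ : Tendsto (fun r ↦ (r, φ r)) (𝓝 0) (𝓝 0))
    (hfix : ∀ᶠ p in 𝓝 (0 : ℝ × C(I, E)), Ψ p = p.2 ↔ φ p.1 = p.2)
    (hΨ : ∀ᶠ p in 𝓝 (0 : ℝ × C(I, E)), ∀ τ, Ψ (dilate τ p) = (Ψ p).comp (.mulLeft τ)) :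
    ∀ᶠ r in 𝓝 0, ∀ τ : I, φ (τ * r) = (φ r).comp (.mulLeft τ) := by
  filter_upwards [hφ.eventually hfix, hφ.eventually hΨ,
    hφ.eventually (eventually_forall_dilate hfix)] with r hr hr_dilate hfix_dilate τ
  -- `(φ r) ∘ (τ ·)` solves the equation with parameter `τ r`, whose small solution is unique.
  refine (hfix_dilate τ).1 ?_
  rw [hr_dilate τ, hr.2 rfl, dilate]

theorem eventually_eulerInverse_dilate {G : Type*} [NormedAddCommGroup G] [NormedSpace ℝ G]
    [CompleteSpace G] {m : ℝ} (hm : 0 < m) {N : ℝ × E → G} {S : ℝ × C(I, E) → C(I, G)}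
    (hSN : ∀ᶠ p in 𝓝 0, ∀ t, S p t = N (p.1 * t, p.2 t)) :
    ∀ᶠ p in 𝓝 0, ∀ τ,
      eulerInverse hm (S (dilate τ p)) = (eulerInverse hm (S p)).comp (.mulLeft τ) := by
  filter_upwards [hSN, eventually_forall_dilate hSN] with p hp hp_dilate τ
  rw [← eulerInverse_comp_mulLeft]
  congr 1
  ext t
  rw [hp_dilate, ContinuousMap.comp_apply, hp, dilate, ContinuousMap.coe_mulLeft]
  simp [mul_comm, mul_left_comm]

end Dilation

section Existence

variable {E : Type*} [NormedAddCommGroup E] [NormedSpace ℝ E]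

/-- The linear map `(r, a) ↦ (t ↦ (r t, a t))`: the graph of `a`, with time rescaled by `r`. -/
noncomputable def rescaledGraph : ℝ × C(I, E) →L[ℝ] C(I, ℝ × E) :=
  ((ContinuousLinearMap.inl ℝ ℝ E).compLeftContinuous ℝ I ∘L
      .toSpanSingleton ℝ (⟨Subtype.val, continuous_subtype_val⟩ : C(I, ℝ))).coprod
    ((ContinuousLinearMap.inr ℝ ℝ E).compLeftContinuous ℝ I)

theorem rescaledGraph_apply (p : ℝ × C(I, E)) (t : I) :
    rescaledGraph p t = (p.1 * t, p.2 t) := by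
  simp [rescaledGraph]

theorem exists_analyticAt_superposition_rescaledGraph {G : Type*} [NormedAddCommGroup G]
    [NormedSpace ℝ G] [CompleteSpace G] {N : ℝ × E → G} (hN : AnalyticAt ℝ N 0) :
    ∃ S : ℝ × C(I, E) → C(I, G), AnalyticAt ℝ S 0 ∧
      ∀ᶠ p in 𝓝 0, ∀ t, S p t = N (p.1 * t, p.2 t) := by
  obtain ⟨S, hS, hSN⟩ := exists_analyticAt_superposition (K := I) hN
  have hgraph : Tendsto (rescaledGraph (E := E)) (𝓝 0) (𝓝 0) := by
    simpa only [map_zero] using (rescaledGraph (E := E)).continuous.tendsto 0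
  refine ⟨S ∘ rescaledGraph, hS.comp_of_eq ((rescaledGraph (E := E)).analyticAt 0) (map_zero _), ?_⟩
  filter_upwards [hgraph.eventually hSN] with p hp t
  rw [Function.comp_apply, hp, rescaledGraph_apply]

theorem fderiv_comp_inr_eq_zero_of_superposition {G : Type*} [NormedAddCommGroup G]
    [NormedSpace ℝ G] {N : ℝ × E → G} (hN : HasFDerivAt (fun x ↦ N (0, x)) (0 : E →L[ℝ] G) 0)
    {S : ℝ × C(I, E) → C(I, G)} (hS : DifferentiableAt ℝ S 0)
    (hSN : ∀ᶠ p in 𝓝 0, ∀ t, S p t = N (p.1 * t, p.2 t)) :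
    fderiv ℝ S 0 ∘L .inr ℝ ℝ C(I, E) = 0 := by
  have hinr : Tendsto (fun b : C(I, E) ↦ ((0 : ℝ), b)) (𝓝 0) (𝓝 0) :=
    Continuous.tendsto (by fun_prop) 0
  have hpartial : HasFDerivAt (fun b ↦ S (0, b)) (fderiv ℝ S 0 ∘L .inr ℝ ℝ C(I, E)) 0 :=
    hS.hasFDerivAt.comp (0 : C(I, E)) (hasFDerivAt_prodMk_right 0 0)
  have hpartial_apply : ∀ᶠ b in 𝓝 0, ∀ t, S (0, b) t = N (0, b t) := by
    simpa only [zero_mul] using hinr.eventually hSN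
  ext b t
  exact hasFDerivAt_superposition_apply hN hpartial hpartial_apply b t

variable [CompleteSpace E] {m : ℝ}

theorem exists_analyticAt_eulerInverse_fixedPoint (hm : 0 < m) {N : ℝ × E → E}
    (hN : AnalyticAt ℝ N 0) (hN0 : N 0 = 0)
    (hN' : HasFDerivAt (fun x ↦ N (0, x)) (0 : E →L[ℝ] E) 0) :
    ∃ (S : ℝ × C(I, E) → C(I, E)) (φ : ℝ → C(I, E)), AnalyticAt ℝ φ 0 ∧ φ 0 = 0 ∧
      (∀ᶠ p in 𝓝 0, ∀ t, S p t = N (p.1 * t, p.2 t)) ∧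
      ∀ᶠ p in 𝓝 0, eulerInverse hm (S p) = p.2 ↔ φ p.1 = p.2 := by
  obtain ⟨S, hS, hSN⟩ := exists_analyticAt_superposition_rescaledGraph hN
  have hS0 : S 0 = 0 := by
    ext t
    simpa [Prod.mk_zero_zero, hN0] using hSN.self_of_nhds t
  have hΨ : AnalyticAt ℝ (eulerInverse hm ∘ S) 0 :=
    ((eulerInverse hm).analyticAt _).comp hS
  have hΨ' : fderiv ℝ (eulerInverse hm ∘ S) 0 ∘L .inr ℝ ℝ C(I, E) = 0 := by
    rw [((eulerInverse hm).hasFDerivAt.comp _ hS.differentiableAt.hasFDerivAt).fderiv,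
      ContinuousLinearMap.comp_assoc,
      fderiv_comp_inr_eq_zero_of_superposition hN' hS.differentiableAt hSN,
      ContinuousLinearMap.comp_zero]
  obtain ⟨φ, hφ, hφ0, hfix⟩ := exists_analyticAt_fixedPoint hΨ (by simp [hS0]) hΨ'
  exact ⟨S, φ, hφ, hφ0, hSN, hfix⟩

theorem smul_deriv_add_smul_eq_of_eulerInverse (hm : 0 < m) {w : ℝ → E} {r : ℝ}
    (hw : DifferentiableAt ℝ w r) {g : C(I, E)}
    (hwg : ∀ τ : I, w (τ * r) = eulerInverse hm g τ) :
    r • deriv w r + m • w r = g 1 := by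
  have hw1 : w r = eulerInverse hm g 1 := by simpa using hwg 1
  have hscaled : HasDerivWithinAt (fun t ↦ w (t * r)) (r • deriv w r) (Icc 0 1) 1 := by
    refine (HasDerivAt.scomp (1 : ℝ) ?_ (hasDerivAt_mul_const r)).hasDerivWithinAt
    simpa using hw.hasDerivAt
  have heuler : HasDerivWithinAt (fun t ↦ w (t * r)) (g 1 - m • w r) (Icc 0 1) 1 := by
    have h := hasDerivWithinAt_eulerInverse hm g (t := 1) one_pos
    rw [← hw1, Icc.coe_one, inv_one, one_smul] at h
    refine h.congr_of_mem (fun t ht ↦ ?_) (right_mem_Icc.2 zero_le_one)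
    rw [IccExtend_of_mem _ _ ht, ← hwg]
  rw [(uniqueDiffOn_Icc zero_lt_one 1 (right_mem_Icc.2 zero_le_one)).eq_deriv _ hscaled heuler,
    sub_add_cancel]

theorem exists_analyticAt_smul_deriv_eq (hm : 0 < m) {F : ℝ × E → E}
    (hF : AnalyticAt ℝ F 0) (hF0 : F 0 = 0)
    (hF' : HasFDerivAt (fun x ↦ F (0, x)) (-(m • .id ℝ E)) 0) :
    ∃ w : ℝ → E, AnalyticAt ℝ w 0 ∧ w 0 = 0 ∧ ∀ᶠ s in 𝓝 0, s • deriv w s = F (s, w s) := by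
  let N : ℝ × E → E := fun p ↦ F p + m • p.2
  have hN : AnalyticAt ℝ N 0 := hF.add (analyticAt_snd.const_smul)
  have hN' : HasFDerivAt (fun x ↦ N (0, x)) (0 : E →L[ℝ] E) 0 := by
    convert! hF'.add ((hasFDerivAt_id (0 : E)).const_smul m) using 1
    simp
  obtain ⟨S, φ, hφ, hφ0, hSN, hfix⟩ :=
    exists_analyticAt_eulerInverse_fixedPoint hm hN (by simp [N, hF0]) hN'
  have hw : AnalyticAt ℝ (fun s ↦ φ s 1) 0 :=
    ((ContinuousMap.evalCLM ℝ 1 : C(I, E) →L[ℝ] E).analyticAt _).comp hφ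
  have hgraph : Tendsto (fun s ↦ (s, φ s)) (𝓝 0) (𝓝 0) := by
    have hcont : ContinuousAt (fun s ↦ (s, φ s)) 0 := continuousAt_id.prodMk hφ.continuousAt
    simpa only [ContinuousAt, hφ0, Prod.mk_zero_zero] using hcont
  refine ⟨fun s ↦ φ s 1, hw, by simp [hφ0], ?_⟩
  filter_upwards [hw.eventually_analyticAt, hgraph.eventually hSN, hgraph.eventually hfix,
    eventually_apply_mul_eq_comp_mulLeft hgraph hfix
      (eventually_eulerInverse_dilate hm hSN)] with s hws hSs hfixs hscale
  have hode := smul_deriv_add_smul_eq_of_eulerInverse hm hws.differentiableAt (g := S (s, φ s))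
    fun τ ↦ by rw [hscale, hfixs.2 rfl]; simp
  simpa [hSs, N] using hode

end Existence

end BriotBouquet

theorem stmt_4_general (m : ℝ) (hm : 0 < m) :
    ∃ δ : ℝ, 0 < δ ∧ ∃ w : ℝ → ℝ,
      AnalyticOnNhd ℝ w (Set.Ioo (-δ) δ) ∧ w 0 = 0 ∧
      ∀ s ∈ Set.Ioo (-δ) δ, s * deriv w s = (1 - (w s) ^ 2) * (s - m * w s) := by
  let F : ℝ × ℝ → ℝ := fun p ↦ (1 - p.2 ^ 2) * (p.1 - m * p.2)
  have hF : AnalyticAt ℝ F 0 :=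
    (analyticAt_const.sub (analyticAt_snd.pow 2)).mul
      (analyticAt_fst.sub (analyticAt_const.mul analyticAt_snd))
  have hF' : HasFDerivAt (fun x ↦ F (0, x)) (-(m • .id ℝ ℝ)) 0 := by
    have hderiv := ((hasDerivAt_id (0 : ℝ)).pow 2).const_sub 1 |>.mul
      (((hasDerivAt_id (0 : ℝ)).const_mul m).const_sub 0)
    convert! hderiv.hasFDerivAt using 1
    ext
    simp
  obtain ⟨w, hw, hw0, hode⟩ :=
    BriotBouquet.exists_analyticAt_smul_deriv_eq hm hF (by simp [F]) hF'
  obtain ⟨δ, hδ, hball⟩ := Metric.eventually_nhds_iff_ball.1 (hw.eventually_analyticAt.and hode)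
  rw [Real.ball_eq_Ioo, zero_sub, zero_add] at hball
  exact ⟨δ, hδ, w, fun s hs ↦ (hball s hs).1, hw0, fun s hs ↦ (hball s hs).2⟩

/-- Local analytic existence at the singular point s = 0 for the first-order equation
arising from rotationally symmetric spacelike translating solitons in Minkowski space. -/
theorem stmt_4 (n : ℕ) (hn : 2 ≤ n) :
    ∃ δ : ℝ, 0 < δ ∧ ∃ w : ℝ → ℝ,
      AnalyticOnNhd ℝ w (Set.Ioo (-δ) δ) ∧ w 0 = 0 ∧
      ∀ s ∈ Set.Ioo (-δ) δ,
        s * deriv w s = (1 - (w s) ^ 2) * (s - ((n : ℝ) - 1) * w s) :=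
  stmt_4_general (n - 1) (sub_pos.2 (Nat.one_lt_cast.2 hn))
end

section
/- Let n ≥ 2 be an integer, ε ∈ {−1, 1}, and f₁ ∈ ℝ. There exist δ > 0 and a function f : ℝ → ℝ which is real-analytic on (−δ, δ) with f(0) = f₁ and f'(0) = 0, such that for every s ∈ (−δ, δ), sinh(s)·f''(s) = (1 + ε·f'(s)²)·(sinh(s) − (n−1)·cosh(s)·f'(s)). -/
/-!
Dividing the equation by `sinh` produces a singular first order equation of Briot–Bouquet type for
`f'`: writing `f' = s u` it becomes `s u' + n u = 1 + s Φ(s, u)`, with `Φ` polynomial in `u` and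
analytic in `s`. Since `k + n ≠ 0` for all `k : ℕ`, the Taylor coefficients of `u` are determined
recursively, and the recursion keeps the norms `∑ ‖uₖ‖ rᵏ` bounded once `r` is small. Integrating
`f'` is again an equation of this type, `s v' + v = f'`, for `f = f₁ + s v`.
-/

open Filter Finset
open scoped Topology PowerSeries

section TaylorSeries

variable {𝕜 : Type*} [NontriviallyNormedField 𝕜]

/-- The Taylor series of `f` at `0`, as a formal power series. -/
noncomputable def taylorSeries (f : 𝕜 → 𝕜) : 𝕜⟦X⟧ :=
  PowerSeries.mk fun n => iteratedDeriv n f 0 / n.factorial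

theorem taylorSeries_const (a : 𝕜) : taylorSeries (fun _ => a) = PowerSeries.C a := by
  ext n
  rcases eq_or_ne n 0 with rfl | hn
  · simp [taylorSeries]
  · simp [taylorSeries, iteratedDeriv_const, PowerSeries.coeff_C, hn]

theorem taylorSeries_id : taylorSeries (fun z : 𝕜 => z) = PowerSeries.X := by
  ext n
  rcases eq_or_ne n 1 with rfl | hn
  · simp [taylorSeries, iteratedDeriv_fun_id]
  · simp [taylorSeries, iteratedDeriv_fun_id, PowerSeries.coeff_X, hn]

theorem taylorSeries_deriv [CharZero 𝕜] (f : 𝕜 → 𝕜) :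
    taylorSeries (deriv f) = PowerSeries.derivative 𝕜 (taylorSeries f) := by
  ext n
  simp only [taylorSeries, PowerSeries.coeff_derivative, PowerSeries.coeff_mk, iteratedDeriv_succ',
    Nat.factorial_succ, Nat.cast_mul, Nat.cast_succ]
  have hn : (n.factorial : 𝕜) ≠ 0 := Nat.cast_ne_zero.2 n.factorial_ne_zero
  have hn' : (n : 𝕜) + 1 ≠ 0 := Nat.cast_add_one_ne_zero n
  field_simp

variable [CompleteSpace 𝕜]

theorem taylorSeries_add {f g : 𝕜 → 𝕜} (hf : AnalyticAt 𝕜 f 0) (hg : AnalyticAt 𝕜 g 0) :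
    taylorSeries (fun z => f z + g z) = taylorSeries f + taylorSeries g := by
  ext n
  simp only [taylorSeries, PowerSeries.coeff_mk, map_add,
    iteratedDeriv_fun_add hf.contDiffAt hg.contDiffAt, add_div]

theorem taylorSeries_sum {ι : Type*} (s : Finset ι) {f : ι → 𝕜 → 𝕜}
    (hf : ∀ i ∈ s, AnalyticAt 𝕜 (f i) 0) :
    taylorSeries (fun z => ∑ i ∈ s, f i z) = ∑ i ∈ s, taylorSeries (f i) := by
  classical
  induction s using Finset.induction_on with
  | empty => simpa using taylorSeries_const (0 : 𝕜)
  | insert i s hi ih =>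
    have hs : ∀ j ∈ s, AnalyticAt 𝕜 (f j) 0 := fun j hj => hf j (mem_insert_of_mem hj)
    simp only [sum_insert hi]
    rw [taylorSeries_add (hf i (mem_insert_self i s)) (s.analyticAt_fun_sum hs), ih hs]

variable [CharZero 𝕜]

theorem taylorSeries_mul {f g : 𝕜 → 𝕜} (hf : AnalyticAt 𝕜 f 0) (hg : AnalyticAt 𝕜 g 0) :
    taylorSeries (fun z => f z * g z) = taylorSeries f * taylorSeries g := by
  ext n
  rw [PowerSeries.coeff_mul, Finset.Nat.sum_antidiagonal_eq_sum_range_succ_mk]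
  simp only [taylorSeries, PowerSeries.coeff_mk,
    iteratedDeriv_fun_mul hf.contDiffAt hg.contDiffAt, sum_div]
  refine sum_congr rfl fun i hi => ?_
  rw [Nat.cast_choose 𝕜 (Nat.lt_succ_iff.1 (mem_range.1 hi))]
  have hn : (n.factorial : 𝕜) ≠ 0 := Nat.cast_ne_zero.2 n.factorial_ne_zero
  field_simp

theorem taylorSeries_pow {f : 𝕜 → 𝕜} (hf : AnalyticAt 𝕜 f 0) (n : ℕ) :
    taylorSeries (fun z => f z ^ n) = taylorSeries f ^ n := by
  induction n with
  | zero => simpa using taylorSeries_const (1 : 𝕜)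
  | succ n ih => simp only [pow_succ, taylorSeries_mul (hf.fun_pow n) hf, ih]

theorem taylorSeries_id_mul {f : 𝕜 → 𝕜} (hf : AnalyticAt 𝕜 f 0) :
    taylorSeries (fun z => z * f z) = PowerSeries.X * taylorSeries f := by
  rw [← taylorSeries_id, taylorSeries_mul (by fun_prop) hf]

theorem taylorSeries_const_mul (a : 𝕜) {f : 𝕜 → 𝕜} (hf : AnalyticAt 𝕜 f 0) :
    taylorSeries (fun z => a * f z) = PowerSeries.C a * taylorSeries f := by
  rw [taylorSeries_mul analyticAt_const hf, taylorSeries_const]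

theorem taylorSeries_sum_mul_pow {d : ℕ} {c : Fin d → 𝕜 → 𝕜} (hc : ∀ j, AnalyticAt 𝕜 (c j) 0)
    {f : 𝕜 → 𝕜} (hf : AnalyticAt 𝕜 f 0) :
    taylorSeries (fun z => ∑ j, c j z * f z ^ (j : ℕ)) =
      ∑ j, taylorSeries (c j) * taylorSeries f ^ (j : ℕ) := by
  rw [taylorSeries_sum _ fun j _ => (hc j).fun_mul (hf.fun_pow j)]
  exact sum_congr rfl fun j _ => by
    rw [taylorSeries_mul (hc j) (hf.fun_pow j), taylorSeries_pow hf]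

theorem eventuallyEq_of_taylorSeries_eq {f g : 𝕜 → 𝕜} (hf : AnalyticAt 𝕜 f 0)
    (hg : AnalyticAt 𝕜 g 0) (hfg : taylorSeries f = taylorSeries g) : f =ᶠ[𝓝 0] g := by
  have hcoeff : ∀ n : ℕ, iteratedDeriv n f 0 / n.factorial = iteratedDeriv n g 0 / n.factorial := by
    simpa [taylorSeries] using PowerSeries.ext_iff.1 hfg
  have hsub := hf.hasFPowerSeriesAt.sub hg.hasFPowerSeriesAt
  simp only [hcoeff, sub_self] at hsub
  filter_upwards [hsub.eventually_eq_zero] with z hz using sub_eq_zero.1 hz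

end TaylorSeries

section TruncNorm

variable {R : Type*} [NormedCommRing R]

/-- The weighted `ℓ¹` norm `∑ k < n, ‖aₖ‖ r ^ k` of the first `n` coefficients of a power series. -/
noncomputable def truncNorm (r : ℝ) (n : ℕ) (A : R⟦X⟧) : ℝ :=
  ∑ k ∈ range n, ‖PowerSeries.coeff k A‖ * r ^ k

theorem truncNorm_nonneg {r : ℝ} (hr : 0 ≤ r) (n : ℕ) (A : R⟦X⟧) : 0 ≤ truncNorm r n A :=
  sum_nonneg fun _ _ => by positivity

theorem norm_coeff_mul_pow_le_truncNorm {r : ℝ} (hr : 0 ≤ r) (n : ℕ) (A : R⟦X⟧) :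
    ‖PowerSeries.coeff n A‖ * r ^ n ≤ truncNorm r (n + 1) A :=
  single_le_sum (f := fun k => ‖PowerSeries.coeff k A‖ * r ^ k) (fun _ _ => by positivity)
    (self_mem_range_succ n)

theorem truncNorm_C_add_X_mul (r : ℝ) (n : ℕ) (a : R) (A : R⟦X⟧) :
    truncNorm r (n + 1) (PowerSeries.C a + PowerSeries.X * A) = ‖a‖ + r * truncNorm r n A := by
  have hsucc (k : ℕ) : PowerSeries.coeff (k + 1) (PowerSeries.C a + PowerSeries.X * A) =
      PowerSeries.coeff k A := by
    simp [PowerSeries.coeff_succ_X_mul]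
  simp only [truncNorm, sum_range_succ', hsucc, pow_succ', mul_left_comm _ r, ← mul_sum]
  simp [add_comm]

theorem truncNorm_sum_le {ι : Type*} {r : ℝ} (hr : 0 ≤ r) (n : ℕ) (s : Finset ι) (A : ι → R⟦X⟧) :
    truncNorm r n (∑ i ∈ s, A i) ≤ ∑ i ∈ s, truncNorm r n (A i) := by
  simp only [truncNorm, map_sum]
  rw [sum_comm]
  refine sum_le_sum fun k _ => ?_
  rw [← sum_mul]
  gcongr
  exact norm_sum_le _ _

theorem truncNorm_mul_le {r : ℝ} (hr : 0 ≤ r) (n : ℕ) (A B : R⟦X⟧) :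
    truncNorm r n (A * B) ≤ truncNorm r n A * truncNorm r n B := by
  set a : ℕ → ℝ := fun k => ‖PowerSeries.coeff k A‖ * r ^ k
  set b : ℕ → ℝ := fun k => ‖PowerSeries.coeff k B‖ * r ^ k
  have hcoeff (k : ℕ) :
      ‖PowerSeries.coeff k (A * B)‖ * r ^ k ≤ ∑ i ∈ range (k + 1), a i * b (k - i) := by
    rw [PowerSeries.coeff_mul, Finset.Nat.sum_antidiagonal_eq_sum_range_succ_mk]
    grw [norm_sum_le, sum_mul]
    refine sum_le_sum fun i hi => ?_
    grw [norm_mul_le, ← Nat.add_sub_of_le (Nat.lt_succ_iff.1 (mem_range.1 hi)), pow_add]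
    exact le_of_eq (by simp only [a, b, add_tsub_cancel_left]; ring)
  calc truncNorm r n (A * B)
      ≤ ∑ k ∈ range n, ∑ i ∈ range (k + 1), a i * b (k - i) := sum_le_sum fun k _ => hcoeff k
    _ = ∑ i ∈ range n, a i * ∑ j ∈ range (n - i), b j := by
      simp only [sum_range_diag_flip n fun i j => a i * b j, mul_sum]
    _ ≤ ∑ i ∈ range n, a i * ∑ j ∈ range n, b j := by
      gcongr with i
      exact Nat.sub_le n i
    _ = truncNorm r n A * truncNorm r n B := (sum_mul ..).symm

theorem truncNorm_mul_pow_le {r : ℝ} (hr : 0 ≤ r) (n : ℕ) (A B : R⟦X⟧) (j : ℕ) :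
    truncNorm r n (A * B ^ j) ≤ truncNorm r n A * truncNorm r n B ^ j := by
  induction j with
  | zero => simp
  | succ j ih =>
    have hB := truncNorm_nonneg hr n B
    grw [pow_succ, ← mul_assoc, truncNorm_mul_le hr, ih, pow_succ, mul_assoc]

/-- Convergence near `0`, in the form `∑ ‖aₖ‖ r ^ k ≤ M` for all small `r > 0`, with `M`
independent of `r`. -/
def IsConvergent (A : R⟦X⟧) : Prop :=
  ∃ M, ∀ᶠ r in 𝓝[>] (0 : ℝ), ∀ n, truncNorm r n A ≤ M

/-- The constant term of `A` is at most `K ‖b‖`, and the remainder carries a factor `r`; hence for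
small `r` the bound `K (‖b‖ + 1)` propagates from one truncation of `A` to the next. -/
theorem isConvergent_of_norm_coeff_le {d : ℕ} {c : Fin d → R⟦X⟧} (hc : ∀ j, IsConvergent (c j))
    {A : R⟦X⟧} {b : R} {K : ℝ} (hK : 0 ≤ K)
    (hA : ∀ k, ‖PowerSeries.coeff k A‖ ≤ K *
      ‖PowerSeries.coeff k (PowerSeries.C b + PowerSeries.X * ∑ j, c j * A ^ (j : ℕ))‖) :
    IsConvergent A := by
  choose M hM using hc
  set B := K * (‖b‖ + 1)
  have hsmall : ∀ᶠ r in 𝓝[>] (0 : ℝ), r * ∑ j, M j * B ^ (j : ℕ) < 1 := by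
    have hcont : Continuous fun r : ℝ => r * ∑ j, M j * B ^ (j : ℕ) := by fun_prop
    exact nhdsWithin_le_nhds <|
      (hcont.tendsto' 0 0 (zero_mul _)).eventually_lt_const one_pos
  refine ⟨B, ?_⟩
  filter_upwards [self_mem_nhdsWithin, eventually_all.2 hM, hsmall] with r hr hM hsmall n
  have hr : 0 ≤ r := le_of_lt hr
  induction n with
  | zero => simp only [truncNorm, range_zero, sum_empty, B]; positivity
  | succ n ih =>
    have hsum : truncNorm r n (∑ j, c j * A ^ (j : ℕ)) ≤ ∑ j, M j * B ^ (j : ℕ) := by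
      grw [truncNorm_sum_le hr]
      refine sum_le_sum fun j _ => ?_
      have := truncNorm_nonneg hr n A
      have := (truncNorm_nonneg hr n (c j)).trans (hM j n)
      grw [truncNorm_mul_pow_le hr, hM j n, ih]
    calc truncNorm r (n + 1) A
        ≤ K * truncNorm r (n + 1)
            (PowerSeries.C b + PowerSeries.X * ∑ j, c j * A ^ (j : ℕ)) := by
          rw [truncNorm, truncNorm, mul_sum]
          refine sum_le_sum fun k _ => ?_
          grw [hA k, mul_assoc]
      _ ≤ K * (‖b‖ + 1) := by
          rw [truncNorm_C_add_X_mul]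
          grw [hsum, hsmall]

end TruncNorm

section Convergence

variable {𝕜 : Type*} [NontriviallyNormedField 𝕜] [CompleteSpace 𝕜] [CharZero 𝕜]

theorem isConvergent_taylorSeries {f : 𝕜 → 𝕜} (hf : AnalyticAt 𝕜 f 0) :
    IsConvergent (taylorSeries f) := by
  set p := FormalMultilinearSeries.ofScalars 𝕜 fun n => iteratedDeriv n f 0 / n.factorial
  obtain ⟨ρ, hρ₀, hρ⟩ := ENNReal.lt_iff_exists_nnreal_btwn.1 hf.hasFPowerSeriesAt.radius_pos
  have hsum : Summable fun n => ‖PowerSeries.coeff n (taylorSeries f)‖ * (ρ : ℝ) ^ n := by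
    simpa only [p, FormalMultilinearSeries.ofScalars_norm, taylorSeries, PowerSeries.coeff_mk]
      using p.summable_norm_mul_pow hρ
  refine ⟨∑' n, ‖PowerSeries.coeff n (taylorSeries f)‖ * (ρ : ℝ) ^ n, ?_⟩
  filter_upwards [Ioc_mem_nhdsGT (NNReal.coe_pos.2 (ENNReal.coe_pos.1 hρ₀))] with r hr n
  calc truncNorm r n (taylorSeries f) ≤ truncNorm ρ n (taylorSeries f) := by
        unfold truncNorm
        gcongr
        exacts [hr.1.le, hr.2]
    _ ≤ _ := hsum.sum_le_tsum _ fun _ _ => by positivity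

theorem IsConvergent.exists_taylorSeries_eq {A : 𝕜⟦X⟧} (hA : IsConvergent A) :
    ∃ f : 𝕜 → 𝕜, AnalyticAt 𝕜 f 0 ∧ taylorSeries f = A := by
  obtain ⟨M, hM⟩ := hA
  obtain ⟨r, hM, hr⟩ := (hM.and self_mem_nhdsWithin).exists
  lift r to NNReal using le_of_lt hr
  set p := FormalMultilinearSeries.ofScalars 𝕜 fun n => PowerSeries.coeff n A
  have hradius : (r : ENNReal) ≤ p.radius := p.le_radius_of_bound M fun n => by
    rw [FormalMultilinearSeries.ofScalars_norm]
    exact (norm_coeff_mul_pow_le_truncNorm r.2 n A).trans (hM (n + 1))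
  have hp : HasFPowerSeriesAt p.sum p 0 :=
    (p.hasFPowerSeriesOnBall <| (ENNReal.coe_pos.2 hr).trans_le hradius).hasFPowerSeriesAt
  refine ⟨p.sum, hp.analyticAt, PowerSeries.ext fun n => ?_⟩
  have hcoeff := congr_arg (·.coeff n)
    (hp.analyticAt.hasFPowerSeriesAt.eq_formalMultilinearSeries hp)
  simpa only [p, taylorSeries, PowerSeries.coeff_mk, FormalMultilinearSeries.coeff_ofScalars]
    using hcoeff

end Convergence

section BriotBouquet

theorem exists_fixedPoint_of_X_pow_dvd {R : Type*} [CommRing R] (T : R⟦X⟧ → R⟦X⟧)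
    (hT : ∀ n A B, PowerSeries.X ^ n ∣ A - B → PowerSeries.X ^ (n + 1) ∣ T A - T B) :
    ∃ A, T A = A := by
  have hiter (n : ℕ) : PowerSeries.X ^ n ∣ T^[n + 1] 0 - T^[n] 0 := by
    induction n with
    | zero => simp
    | succ n ih => simpa only [Function.iterate_succ_apply'] using hT n _ _ ih
  set A : R⟦X⟧ := PowerSeries.mk fun k => PowerSeries.coeff k (T^[k + 1] 0)
  have hA (n : ℕ) : PowerSeries.X ^ n ∣ A - T^[n] 0 := by
    induction n with
    | zero => simp
    | succ n ih =>
      have hn := ih.sub (hiter n)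
      rw [sub_sub_sub_cancel_right, PowerSeries.X_pow_dvd_iff] at hn
      rw [PowerSeries.X_pow_dvd_iff]
      intro k hk
      rcases Nat.lt_succ_iff_lt_or_eq.1 hk with hk | rfl
      · exact hn k hk
      · simp [A]
  refine ⟨A, PowerSeries.ext fun n => sub_eq_zero.1 ?_⟩
  have hTA : PowerSeries.X ^ (n + 1) ∣ T A - A := by
    simpa only [Function.iterate_succ_apply', sub_sub_sub_cancel_right] using
      (hT n _ _ (hA n)).sub (hA (n + 1))
  simpa only [map_sub] using PowerSeries.X_pow_dvd_iff.1 hTA n n.lt_succ_self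

theorem coeff_X_mul_derivative {R : Type*} [CommSemiring R] (A : R⟦X⟧) (k : ℕ) :
    PowerSeries.coeff k (PowerSeries.X * PowerSeries.derivative R A) =
      k * PowerSeries.coeff k A := by
  cases k with
  | zero => simp
  | succ k => simp [PowerSeries.coeff_succ_X_mul, PowerSeries.coeff_derivative, mul_comm]

theorem exists_powerSeries_briotBouquet {F : Type*} [Field F] {d : ℕ} (c : Fin d → F⟦X⟧) (b : F)
    {μ : F} (hμ : ∀ k : ℕ, (k : F) + μ ≠ 0) :
    ∃ A : F⟦X⟧, PowerSeries.X * PowerSeries.derivative F A + PowerSeries.C μ * A =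
      PowerSeries.C b + PowerSeries.X * ∑ j, c j * A ^ (j : ℕ) := by
  set Φ : F⟦X⟧ → F⟦X⟧ := fun A => PowerSeries.C b + PowerSeries.X * ∑ j, c j * A ^ (j : ℕ)
  have hΦ (n : ℕ) (A B : F⟦X⟧) (h : PowerSeries.X ^ n ∣ A - B) :
      PowerSeries.X ^ (n + 1) ∣ Φ A - Φ B := by
    simp only [Φ, add_sub_add_left_eq_sub, ← mul_sub, ← sum_sub_distrib, pow_succ']
    exact mul_dvd_mul_left _ <| dvd_sum fun j _ => (h.trans (sub_dvd_pow_sub_pow A B j)).mul_left _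
  obtain ⟨A, hA⟩ := exists_fixedPoint_of_X_pow_dvd
    (fun A => PowerSeries.mk fun k => ((k : F) + μ)⁻¹ * PowerSeries.coeff k (Φ A))
    fun n A B h => by
      have hcoeff := PowerSeries.X_pow_dvd_iff.1 (hΦ n A B h)
      refine PowerSeries.X_pow_dvd_iff.2 fun k hk => ?_
      simpa [← mul_sub] using Or.inr (hcoeff k hk)
  refine ⟨A, PowerSeries.ext fun k => ?_⟩
  have hk : PowerSeries.coeff k A = ((k : F) + μ)⁻¹ * PowerSeries.coeff k (Φ A) := by
    simpa using congr_arg (PowerSeries.coeff k) hA.symm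
  rw [map_add, coeff_X_mul_derivative, PowerSeries.coeff_C_mul, ← add_mul, hk,
    mul_inv_cancel_left₀ (hμ k)]

variable {𝕜 : Type*} [RCLike 𝕜]

theorem exists_norm_inv_natCast_add_le (μ : 𝕜) : ∃ K : ℝ, ∀ k : ℕ, ‖((k : 𝕜) + μ)⁻¹‖ ≤ K := by
  have htendsto : Tendsto (fun k : ℕ => ((k : 𝕜) + μ)⁻¹) atTop (𝓝 0) :=
    tendsto_inv₀_cobounded.comp
      ((tendsto_add_const_cobounded μ).comp tendsto_natCast_atTop_cobounded)
  obtain ⟨K, hK⟩ := htendsto.norm.bddAbove_range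
  exact ⟨K, fun k => hK ⟨k, rfl⟩⟩

theorem isConvergent_of_briotBouquet {d : ℕ} {c : Fin d → 𝕜⟦X⟧} (hc : ∀ j, IsConvergent (c j))
    {b μ : 𝕜} (hμ : ∀ k : ℕ, (k : 𝕜) + μ ≠ 0) {A : 𝕜⟦X⟧}
    (hA : PowerSeries.X * PowerSeries.derivative 𝕜 A + PowerSeries.C μ * A =
      PowerSeries.C b + PowerSeries.X * ∑ j, c j * A ^ (j : ℕ)) :
    IsConvergent A := by
  obtain ⟨K, hK⟩ := exists_norm_inv_natCast_add_le μ
  refine isConvergent_of_norm_coeff_le hc (b := b) ((norm_nonneg _).trans (hK 0)) fun k => ?_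
  have hk : PowerSeries.coeff k A = ((k : 𝕜) + μ)⁻¹ *
      PowerSeries.coeff k (PowerSeries.C b + PowerSeries.X * ∑ j, c j * A ^ (j : ℕ)) := by
    rw [← hA, map_add, coeff_X_mul_derivative, PowerSeries.coeff_C_mul, ← add_mul,
      inv_mul_cancel_left₀ (hμ k)]
  grw [hk, norm_mul, hK k]

theorem exists_analyticAt_briotBouquet {d : ℕ} {c : Fin d → 𝕜 → 𝕜}
    (hc : ∀ j, AnalyticAt 𝕜 (c j) 0) (b : 𝕜) {μ : 𝕜} (hμ : ∀ k : ℕ, (k : 𝕜) + μ ≠ 0) :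
    ∃ y : 𝕜 → 𝕜, AnalyticAt 𝕜 y 0 ∧
      ∀ᶠ z in 𝓝 0, z * deriv y z + μ * y z = b + z * ∑ j, c j z * y z ^ (j : ℕ) := by
  obtain ⟨A, hA⟩ := exists_powerSeries_briotBouquet (fun j => taylorSeries (c j)) b hμ
  have hc' (j : Fin d) : IsConvergent (taylorSeries (c j)) := isConvergent_taylorSeries (hc j)
  obtain ⟨y, hy, hyA⟩ := (isConvergent_of_briotBouquet hc' hμ hA).exists_taylorSeries_eq
  have hsum : AnalyticAt 𝕜 (fun z => ∑ j, c j z * y z ^ (j : ℕ)) 0 :=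
    univ.analyticAt_fun_sum fun j _ => (hc j).fun_mul (hy.fun_pow j)
  have hzsum : AnalyticAt 𝕜 (fun z => z * ∑ j, c j z * y z ^ (j : ℕ)) 0 := by fun_prop
  have hzy' : AnalyticAt 𝕜 (fun z => z * deriv y z) 0 := by fun_prop
  have hμy : AnalyticAt 𝕜 (fun z => μ * y z) 0 := by fun_prop
  refine ⟨y, hy, eventuallyEq_of_taylorSeries_eq (hzy'.fun_add hμy)
    (analyticAt_const.fun_add hzsum) ?_⟩
  rw [taylorSeries_add hzy' hμy, taylorSeries_id_mul hy.deriv, taylorSeries_deriv,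
    taylorSeries_const_mul μ hy, taylorSeries_add analyticAt_const hzsum, taylorSeries_const,
    taylorSeries_id_mul hsum, taylorSeries_sum_mul_pow hc hy, hyA, hA]

end BriotBouquet

section Dslope

variable {𝕜 : Type*} [NontriviallyNormedField 𝕜]

theorem analyticAt_dslope {E : Type*} [NormedAddCommGroup E] [NormedSpace 𝕜 E] {f : 𝕜 → E} {a : 𝕜}
    (hf : AnalyticAt 𝕜 f a) : AnalyticAt 𝕜 (dslope f a) a :=
  let ⟨_, hp⟩ := hf
  ⟨_, hp.has_fpower_series_dslope_fslope⟩

theorem eq_add_mul_dslope_zero (f : 𝕜 → 𝕜) (z : 𝕜) : f z = f 0 + z * dslope f 0 z := by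
  simpa [sub_eq_iff_eq_add'] using (sub_smul_dslope f 0 z).symm

theorem eventually_deriv_id_mul_eq [CompleteSpace 𝕜] {u : 𝕜 → 𝕜} {a : 𝕜} (hu : AnalyticAt 𝕜 u a) :
    ∀ᶠ z in 𝓝 a, deriv (fun z => z * u z) z = z * deriv u z + u z := by
  filter_upwards [hu.eventually_analyticAt] with z hz
  rw [deriv_fun_mul differentiableAt_fun_id hz.differentiableAt, deriv_id'']
  ring

end Dslope

section SolitonEquation

variable {𝕜 : Type*} [RCLike 𝕜]

theorem exists_analyticAt_primitive {g : 𝕜 → 𝕜} (hg : AnalyticAt 𝕜 g 0) (a : 𝕜) :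
    ∃ f : 𝕜 → 𝕜, AnalyticAt 𝕜 f 0 ∧ f 0 = a ∧ deriv f =ᶠ[𝓝 0] g := by
  obtain ⟨v, hv, hode⟩ := exists_analyticAt_briotBouquet (d := 1) (c := fun _ => dslope g 0)
    (fun _ => analyticAt_dslope hg) (g 0) (μ := 1) Nat.cast_add_one_ne_zero
  refine ⟨fun z => a + z * v z, analyticAt_const.add (analyticAt_id.mul hv), by simp, ?_⟩
  filter_upwards [hode, eventually_deriv_id_mul_eq hv] with z hode hderiv
  rw [deriv_const_add, hderiv, eq_add_mul_dslope_zero g z]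
  simpa using hode

/-- The coefficient `m φ' / φ` has a simple pole with residue `m`, so that `z m φ' / φ = m + z k`
with `k` analytic; the substitution `x = z u` then gives
`z u' + (1 + m) u = 1 + z (-k u + ε z u² - ε z (m + z k) u³)`. -/
theorem exists_analyticAt_solution_of_simple_zero {φ : 𝕜 → 𝕜} (hφ : AnalyticAt 𝕜 φ 0)
    (hφ₀ : φ 0 = 0) (hφ' : deriv φ 0 ≠ 0) {m : 𝕜} (hm : ∀ k : ℕ, (k : 𝕜) + (1 + m) ≠ 0) (ε : 𝕜) :
    ∃ x : 𝕜 → 𝕜, AnalyticAt 𝕜 x 0 ∧ x 0 = 0 ∧ ∀ᶠ z in 𝓝 0,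
      φ z * deriv x z = (1 + ε * x z ^ 2) * (φ z - m * deriv φ z * x z) := by
  set σ := dslope φ 0
  have hσ : AnalyticAt 𝕜 σ 0 := analyticAt_dslope hφ
  have hσ₀ : σ 0 ≠ 0 := by rwa [show σ 0 = deriv φ 0 from dslope_same φ 0]
  set h : 𝕜 → 𝕜 := fun z => m * deriv φ z / σ z
  have hh : AnalyticAt 𝕜 h 0 := (analyticAt_const.mul hφ.deriv).div hσ hσ₀
  have hh₀ : h 0 = m := by simp [h, σ, hφ']
  set k := dslope h 0
  have hk : AnalyticAt 𝕜 k 0 := analyticAt_dslope hh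
  set c : Fin 4 → 𝕜 → 𝕜 := ![fun _ => 0, fun z => -k z, fun z => ε * z, fun z => -(ε * z * h z)]
  have hc (j : Fin 4) : AnalyticAt 𝕜 (c j) 0 := by
    fin_cases j <;> simp only [c] <;> dsimp <;> fun_prop
  obtain ⟨u, hu, hode⟩ := exists_analyticAt_briotBouquet hc 1 hm
  refine ⟨fun z => z * u z, analyticAt_id.mul hu, zero_mul _, ?_⟩
  filter_upwards [hode, eventually_deriv_id_mul_eq hu, hσ.continuousAt.eventually_ne hσ₀]
    with z hode hderiv hσz
  have hφz : φ z = z * σ z := by simpa [hφ₀] using eq_add_mul_dslope_zero φ z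
  have hhz : h z = m + z * k z := by simpa only [hh₀] using eq_add_mul_dslope_zero h z
  have hφ'z : m * deriv φ z = h z * σ z := (div_mul_cancel₀ _ hσz).symm
  replace hode : z * deriv u z + (1 + m) * u z =
      1 + z * (-(k z * u z) + ε * z * u z ^ 2 + -(ε * z * h z * u z ^ 3)) := by
    simpa [c, Fin.sum_univ_four] using hode
  rw [hderiv, hφz, hφ'z]
  linear_combination z * σ z * hode + z * σ z * u z * hhz

end SolitonEquation

theorem stmt_7_general {φ : ℝ → ℝ} (hφ : AnalyticAt ℝ φ 0) (hφ₀ : φ 0 = 0) (hφ' : deriv φ 0 ≠ 0)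
    {m : ℝ} (hm : ∀ k : ℕ, (k : ℝ) + (1 + m) ≠ 0) (ε f₁ : ℝ) :
    ∃ δ : ℝ, 0 < δ ∧ ∃ f : ℝ → ℝ,
      AnalyticOnNhd ℝ f (Set.Ioo (-δ) δ) ∧ f 0 = f₁ ∧ deriv f 0 = 0 ∧
      ∀ s ∈ Set.Ioo (-δ) δ,
        φ s * deriv (deriv f) s =
          (1 + ε * (deriv f s) ^ 2) * (φ s - m * deriv φ s * deriv f s) := by
  obtain ⟨x, hx, hx₀, hode⟩ := exists_analyticAt_solution_of_simple_zero hφ hφ₀ hφ' hm ε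
  obtain ⟨f, hf, hf₀, hfx⟩ := exists_analyticAt_primitive hx f₁
  obtain ⟨δ, hδ, hball⟩ := Metric.eventually_nhds_iff_ball.1
    (hf.eventually_analyticAt.and (hfx.eventuallyEq_nhds.and hode))
  simp only [Real.ball_eq_Ioo, zero_sub, zero_add] at hball
  refine ⟨δ, hδ, f, fun s hs => (hball s hs).1, hf₀, hfx.eq_of_nhds.trans hx₀, fun s hs => ?_⟩
  obtain ⟨-, hfxs, hodes⟩ := hball s hs
  rw [hfxs.deriv_eq, hfxs.eq_of_nhds, hodes]

/-- Local analytic existence at s = 0 for the rotationally symmetric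
translating-soliton ODE in ℍⁿ × ℝ. -/
theorem stmt_7 (n : ℕ) (hn : 2 ≤ n) (ε : ℝ) (hε : ε = 1 ∨ ε = -1) (f₁ : ℝ) :
    ∃ δ : ℝ, 0 < δ ∧ ∃ f : ℝ → ℝ,
      AnalyticOnNhd ℝ f (Set.Ioo (-δ) δ) ∧ f 0 = f₁ ∧ deriv f 0 = 0 ∧
      ∀ s ∈ Set.Ioo (-δ) δ,
        Real.sinh s * deriv (deriv f) s =
          (1 + ε * (deriv f s) ^ 2) *
            (Real.sinh s - ((n : ℝ) - 1) * Real.cosh s * deriv f s) := by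
  have hm (k : ℕ) : (k : ℝ) + (1 + ((n : ℝ) - 1)) ≠ 0 := by
    rw [add_sub_cancel]; exact_mod_cast (show k + n ≠ 0 by omega)
  simpa only [Real.deriv_sinh] using
    stmt_7_general Real.analyticAt_sinh Real.sinh_zero (by simp) hm ε f₁
end

section
/- Let n ≥ 2 be an integer, T ∈ (0, +∞], and let f : ℝ → ℝ be continuously differentiable on [0, T) and twice differentiable at every s ∈ (0, T), with f'(0) = 0 and f''(s) = (1 + f'(s)²)·(1 − (n−1)·(cosh(s)/sinh(s))·f'(s)) for every s ∈ (0, T). Then f'(s) ≥ 0 for every s ∈ [0, T). -/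
/-!
Where `p = f'` is negative, both factors of `p' = (1 + p²) (1 - H p)` are positive as soon as
`H ≥ 0`, so `p` increases there. If `p` were negative at `b`, it would increase from the last
earlier point where `p ≥ 0` up to `b`, which is absurd. The argument never evaluates the equation
at `0`, where `H = (n - 1) coth` is singular.
-/

open Set

theorem le_of_deriv_nonneg_of_lt {g : ℝ → ℝ} {a b c : ℝ} (hab : a ≤ b)
    (hg : ContinuousOn g (Icc a b)) (ha : c ≤ g a)
    (hdiff : ∀ x ∈ Ioo a b, g x < c → DifferentiableAt ℝ g x)
    (hderiv : ∀ x ∈ Ioo a b, g x < c → 0 ≤ deriv g x) : c ≤ g b := by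
  have hcompact : IsCompact (Icc a b ∩ g ⁻¹' Ici c) :=
    isCompact_Icc.of_isClosed_subset (hg.preimage_isClosed_of_isClosed isClosed_Icc isClosed_Ici)
      inter_subset_left
  obtain ⟨t, ⟨ht, hct⟩, hlast⟩ := hcompact.exists_isGreatest ⟨a, left_mem_Icc.2 hab, ha⟩
  have hbelow : ∀ x ∈ Ioo t b, x ∈ Ioo a b ∧ g x < c := fun x hx ↦
    have hx' : x ∈ Ioo a b := ⟨ht.1.trans_lt hx.1, hx.2⟩
    ⟨hx', not_le.1 fun hcx ↦ hx.1.not_ge (hlast ⟨Ioo_subset_Icc_self hx', hcx⟩)⟩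
  have hmono : MonotoneOn g (Icc t b) := by
    refine monotoneOn_of_deriv_nonneg (convex_Icc t b) (hg.mono (Icc_subset_Icc_left ht.1)) ?_ ?_
    · rw [interior_Icc]
      exact fun x hx ↦ (hdiff x (hbelow x hx).1 (hbelow x hx).2).differentiableWithinAt
    · rw [interior_Icc]
      exact fun x hx ↦ hderiv x (hbelow x hx).1 (hbelow x hx).2
  exact hct.trans (hmono (left_mem_Icc.2 ht.2) (right_mem_Icc.2 ht.2) ht.2)

theorem ordConnected_setOf_le_coe_lt (a : ℝ) (T : EReal) :
    OrdConnected {s : ℝ | a ≤ s ∧ (s : EReal) < T} :=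
  ordConnected_Ici.inter (ordConnected_Iio.preimage_mono EReal.coe_strictMono.monotone)

theorem uniqueDiffOn_setOf_le_coe_lt {a : ℝ} {T : EReal} (haT : a < T) :
    UniqueDiffOn ℝ {s : ℝ | a ≤ s ∧ (s : EReal) < T} := by
  obtain ⟨c, hac, hcT⟩ := EReal.lt_iff_exists_real_btwn.1 haT
  have hac' : a < c := EReal.coe_lt_coe_iff.1 hac
  have hconv : Convex ℝ {s : ℝ | a ≤ s ∧ (s : EReal) < T} :=
    (ordConnected_setOf_le_coe_lt a T).convex
  exact uniqueDiffOn_convex hconv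
    (hconv.nontrivial_iff_nonempty_interior.1 ⟨a, ⟨le_rfl, haT⟩, c, ⟨hac'.le, hcT⟩, hac'.ne⟩)

theorem one_add_sq_mul_one_sub_mul_nonneg {h p : ℝ} (hh : 0 ≤ h) (hp : p ≤ 0) :
    0 ≤ (1 + p ^ 2) * (1 - h * p) :=
  mul_nonneg (by positivity) (by linarith [mul_nonpos_of_nonneg_of_nonpos hh hp])

theorem sub_one_mul_cosh_div_sinh_nonneg {d s : ℝ} (hd : 1 ≤ d) (hs : 0 < s) :
    0 ≤ (d - 1) * (Real.cosh s / Real.sinh s) :=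
  mul_nonneg (sub_nonneg.2 hd) (div_pos (Real.cosh_pos s) (Real.sinh_pos_iff.2 hs)).le

/-- `H s` stands for the mean curvature of the geodesic sphere of radius `s` in a rotationally
symmetric base manifold. -/
theorem stmt_9_general (H : ℝ → ℝ) (T : EReal) (hH : ∀ s : ℝ, 0 < s → (s : EReal) < T → 0 ≤ H s)
    (f : ℝ → ℝ) (hf : ContDiffOn ℝ 1 f {s : ℝ | 0 ≤ s ∧ (s : EReal) < T})
    (hf' : ∀ s : ℝ, 0 < s → (s : EReal) < T →
      DifferentiableAt ℝ (derivWithin f {s : ℝ | 0 ≤ s ∧ (s : EReal) < T}) s)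
    (h0 : 0 ≤ derivWithin f {s : ℝ | 0 ≤ s ∧ (s : EReal) < T} 0)
    (hODE : ∀ s : ℝ, 0 < s → (s : EReal) < T →
      deriv (derivWithin f {s : ℝ | 0 ≤ s ∧ (s : EReal) < T}) s =
        (1 + (derivWithin f {s : ℝ | 0 ≤ s ∧ (s : EReal) < T} s) ^ 2) *
          (1 - H s * derivWithin f {s : ℝ | 0 ≤ s ∧ (s : EReal) < T} s)) :
    ∀ s : ℝ, 0 ≤ s → (s : EReal) < T →
      0 ≤ derivWithin f {s : ℝ | 0 ≤ s ∧ (s : EReal) < T} s := by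
  intro b hb hbT
  have hT : ((0 : ℝ) : EReal) < T := (EReal.coe_le_coe_iff.2 hb).trans_lt hbT
  have hsub : Icc 0 b ⊆ {s : ℝ | 0 ≤ s ∧ (s : EReal) < T} :=
    (ordConnected_setOf_le_coe_lt 0 T).out ⟨le_rfl, hT⟩ ⟨hb, hbT⟩
  have hcont := (hf.continuousOn_derivWithin (uniqueDiffOn_setOf_le_coe_lt hT) le_rfl).mono hsub
  have hlt : ∀ x ∈ Ioo 0 b, (x : EReal) < T := fun x hx ↦ (hsub (Ioo_subset_Icc_self hx)).2
  refine le_of_deriv_nonneg_of_lt hb hcont h0 (fun x hx _ ↦ hf' x hx.1 (hlt x hx)) ?_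
  intro x hx hneg
  rw [hODE x hx.1 (hlt x hx)]
  exact one_add_sq_mul_one_sub_mul_nonneg (hH x hx.1 (hlt x hx)) hneg.le

/-- Monotonicity of solutions of the rotationally symmetric translating-soliton
ODE in the Riemannian product ℍⁿ × ℝ: the derivative stays nonnegative. -/
theorem stmt_9 (n : ℕ) (hn : 2 ≤ n) (T : EReal) (hT : 0 < T) (f : ℝ → ℝ)
    (hf : ContDiffOn ℝ 1 f {s : ℝ | 0 ≤ s ∧ (s : EReal) < T})
    (hf' : ∀ s : ℝ, 0 < s → (s : EReal) < T →
      DifferentiableAt ℝ (derivWithin f {s : ℝ | 0 ≤ s ∧ (s : EReal) < T}) s)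
    (h0 : derivWithin f {s : ℝ | 0 ≤ s ∧ (s : EReal) < T} 0 = 0)
    (hODE : ∀ s : ℝ, 0 < s → (s : EReal) < T →
      deriv (derivWithin f {s : ℝ | 0 ≤ s ∧ (s : EReal) < T}) s =
        (1 + (derivWithin f {s : ℝ | 0 ≤ s ∧ (s : EReal) < T} s) ^ 2) *
          (1 - ((n : ℝ) - 1) * (Real.cosh s / Real.sinh s) *
            derivWithin f {s : ℝ | 0 ≤ s ∧ (s : EReal) < T} s)) :
    ∀ s : ℝ, 0 ≤ s → (s : EReal) < T →
      0 ≤ derivWithin f {s : ℝ | 0 ≤ s ∧ (s : EReal) < T} s :=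
  stmt_9_general _ T (fun _ hs _ ↦ sub_one_mul_cosh_div_sinh_nonneg
    (Nat.one_le_cast.2 (one_le_two.trans hn)) hs) f hf hf' h0.ge hODE
end

section
/- Let n ≥ 2 be an integer and f₁ ∈ ℝ. There exists a function f : ℝ → ℝ which is continuously differentiable on [0, +∞) and twice differentiable at every s > 0, with f(0) = f₁ and f'(0) = 0, such that f''(s) = (1 + f'(s)²)·(1 − (n−1)·(cosh(s)/sinh(s))·f'(s)) for every s > 0. -/
/-!
Write `v = f'`, let `H s` be the mean curvature of the geodesic sphere of radius `s`, and
`r = 1 / H`. The equation `v' = (1 + v²) (1 - H v)` is the linear singular equation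
`v' + H v = g` with `g = 1 + v² (1 - v / r)`. The integrating factor `p = exp ∫ H` increases, so
the solution `p⁻¹ ∫₀ˢ p g` of the linear equation is bounded by `∫₀ˢ |g|`, no matter how singular
`H` is at `0`. Hence, once `g` is cut off to be Lipschitz in `v`, Picard iteration in an
exponentially weighted sup norm contracts on all of `[0, ∞)`. The cut-off acts only outside
`0 ≤ v ≤ r`, and the solution never leaves this region: it would be increasing below `0` and
decreasing above the monotone barrier `r`.
-/

open Set Filter Topology MeasureTheory
open scoped NNReal BoundedContinuousFunction

namespace TranslatingSoliton

section Duhamel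

variable {h g g₁ g₂ : ℝ → ℝ}

/-- The integrating factor `exp (∫ h)` of `y' + h y = g` on `(0, ∞)`, for a coefficient `h` that may
be singular at `0`. It is extended by `0` to `(-∞, 0]`, which keeps it monotone when `0 ≤ h`. -/
noncomputable def integratingFactor (h : ℝ → ℝ) : ℝ → ℝ :=
  (Ioi 0).indicator fun s => Real.exp (∫ τ in (1 : ℝ)..s, h τ)

/-- The solution of `y' + h y = g` on `(0, ∞)` with `y 0 = 0` given by variation of constants. On
`(-∞, 0]` the integrating factor vanishes, so the division by zero makes this function vanish. -/
noncomputable def duhamel (h g : ℝ → ℝ) (s : ℝ) : ℝ :=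
  (∫ τ in (0 : ℝ)..s, integratingFactor h τ * g τ) / integratingFactor h s

lemma integratingFactor_of_nonpos {s : ℝ} (hs : s ≤ 0) : integratingFactor h s = 0 :=
  indicator_of_notMem (notMem_Ioi.2 hs) _

lemma integratingFactor_of_pos {s : ℝ} (hs : 0 < s) :
    integratingFactor h s = Real.exp (∫ τ in (1 : ℝ)..s, h τ) :=
  indicator_of_mem hs _

lemma integratingFactor_pos {s : ℝ} (hs : 0 < s) : 0 < integratingFactor h s := by
  rw [integratingFactor_of_pos hs]
  exact Real.exp_pos _

lemma integratingFactor_nonneg (s : ℝ) : 0 ≤ integratingFactor h s :=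
  indicator_nonneg (fun _ _ => (Real.exp_pos _).le) s

lemma hasDerivAt_integratingFactor (hh : ContinuousOn h (Ioi 0)) {s : ℝ} (hs : 0 < s) :
    HasDerivAt (integratingFactor h) (integratingFactor h s * h s) s := by
  have hint : IntervalIntegrable h volume 1 s :=
    (hh.mono fun _ hτ => (lt_min one_pos hs).trans_le hτ.1).intervalIntegrable
  have hexp := (intervalIntegral.integral_hasDerivAt_right hint
    (hh.stronglyMeasurableAtFilter isOpen_Ioi s hs) (hh.continuousAt (Ioi_mem_nhds hs))).exp
  rw [integratingFactor_of_pos hs]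
  refine hexp.congr_of_eventuallyEq ?_
  filter_upwards [Ioi_mem_nhds hs] with x hx using integratingFactor_of_pos hx

lemma monotone_integratingFactor (hh : ContinuousOn h (Ioi 0)) (h_nonneg : ∀ s, 0 < s → 0 ≤ h s) :
    Monotone (integratingFactor h) := by
  have hmono : MonotoneOn (integratingFactor h) (Ioi 0) := by
    refine monotoneOn_of_hasDerivWithinAt_nonneg (convex_Ioi 0)
      (f' := fun s => integratingFactor h s * h s)
      (fun s hs => (hasDerivAt_integratingFactor hh hs).continuousAt.continuousWithinAt)
      (fun s hs => ?_) (fun s hs => ?_) <;> rw [interior_Ioi] at hs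
    · exact (hasDerivAt_integratingFactor hh hs).hasDerivWithinAt
    · exact mul_nonneg (integratingFactor_nonneg s) (h_nonneg s hs)
  intro s t hst
  rcases le_or_gt s 0 with hs | hs
  · rw [integratingFactor_of_nonpos hs]
    exact integratingFactor_nonneg t
  · exact hmono hs (hs.trans_le hst) hst

lemma duhamel_of_nonpos {s : ℝ} (hs : s ≤ 0) : duhamel h g s = 0 := by
  rw [duhamel, integratingFactor_of_nonpos hs, div_zero]

lemma intervalIntegrable_integratingFactor_mul (hh : ContinuousOn h (Ioi 0))
    (h_nonneg : ∀ s, 0 < s → 0 ≤ h s) (hg : Continuous g) (a b : ℝ) :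
    IntervalIntegrable (fun τ => integratingFactor h τ * g τ) volume a b :=
  (monotone_integratingFactor hh h_nonneg).intervalIntegrable.mul_continuousOn hg.continuousOn

lemma duhamel_sub_duhamel (hh : ContinuousOn h (Ioi 0)) (h_nonneg : ∀ s, 0 < s → 0 ≤ h s)
    (hg₁ : Continuous g₁) (hg₂ : Continuous g₂) (s : ℝ) :
    duhamel h g₁ s - duhamel h g₂ s = duhamel h (fun τ => g₁ τ - g₂ τ) s := by
  simp only [duhamel, mul_sub]
  rw [intervalIntegral.integral_sub, sub_div]
  exacts [intervalIntegrable_integratingFactor_mul hh h_nonneg hg₁ 0 s,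
    intervalIntegrable_integratingFactor_mul hh h_nonneg hg₂ 0 s]

lemma hasDerivAt_duhamel (hh : ContinuousOn h (Ioi 0)) (h_nonneg : ∀ s, 0 < s → 0 ≤ h s)
    (hg : Continuous g) {s : ℝ} (hs : 0 < s) :
    HasDerivAt (duhamel h g) (g s - h s * duhamel h g s) s := by
  have hp := hasDerivAt_integratingFactor hh hs
  have hp_ne : integratingFactor h s ≠ 0 := (integratingFactor_pos hs).ne'
  have hmeas : Measurable fun τ => integratingFactor h τ * g τ :=
    (monotone_integratingFactor hh h_nonneg).measurable.mul hg.measurable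
  have hnum := intervalIntegral.integral_hasDerivAt_right
    (intervalIntegrable_integratingFactor_mul hh h_nonneg hg 0 s)
    hmeas.stronglyMeasurable.stronglyMeasurableAtFilter
    (hp.continuousAt.mul hg.continuousAt)
  refine (hnum.div hp hp_ne).congr_deriv ?_
  rw [duhamel]
  field_simp

lemma abs_duhamel_le_integral_abs (hh : ContinuousOn h (Ioi 0)) (h_nonneg : ∀ s, 0 < s → 0 ≤ h s)
    (hg : Continuous g) {s : ℝ} (hs : 0 ≤ s) :
    |duhamel h g s| ≤ ∫ τ in (0 : ℝ)..s, |g τ| := by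
  have hp_nonneg := integratingFactor_nonneg (h := h)
  have hint_nonneg : 0 ≤ ∫ τ in (0 : ℝ)..s, |g τ| :=
    intervalIntegral.integral_nonneg hs fun τ _ => abs_nonneg (g τ)
  rw [duhamel, abs_div, abs_of_nonneg (hp_nonneg s)]
  refine div_le_of_le_mul₀ (hp_nonneg s) hint_nonneg ?_
  rw [mul_comm, ← intervalIntegral.integral_const_mul, ← Real.norm_eq_abs]
  refine intervalIntegral.norm_integral_le_of_norm_le hs (ae_of_all volume fun τ hτ => ?_)
    ((continuous_const.mul hg.abs).intervalIntegrable 0 s)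
  rw [Real.norm_eq_abs, abs_mul, abs_of_nonneg (hp_nonneg τ)]
  gcongr
  exact monotone_integratingFactor hh h_nonneg hτ.2

lemma abs_duhamel_le_of_abs_le_deriv (hh : ContinuousOn h (Ioi 0))
    (h_nonneg : ∀ s, 0 < s → 0 ≤ h s) (hg : Continuous g) {E E' : ℝ → ℝ}
    (hE : ∀ s, HasDerivAt E (E' s) s) (hE' : Continuous E') (hE_nonneg : ∀ s, 0 ≤ E s)
    (hgE : ∀ s, 0 ≤ s → |g s| ≤ E' s) (s : ℝ) :
    |duhamel h g s| ≤ E s := by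
  rcases le_total s 0 with hs | hs
  · rw [duhamel_of_nonpos hs, abs_zero]
    exact hE_nonneg s
  calc |duhamel h g s| ≤ ∫ τ in (0 : ℝ)..s, |g τ| := abs_duhamel_le_integral_abs hh h_nonneg hg hs
    _ ≤ ∫ τ in (0 : ℝ)..s, E' τ :=
        intervalIntegral.integral_mono_on hs (hg.abs.intervalIntegrable 0 s)
          (hE'.intervalIntegrable 0 s) fun τ hτ => hgE τ hτ.1
    _ = E s - E 0 :=
        intervalIntegral.integral_eq_sub_of_hasDerivAt (fun τ _ => hE τ)
          (hE'.intervalIntegrable 0 s)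
    _ ≤ E s := sub_le_self _ (hE_nonneg 0)

lemma continuous_duhamel (hh : ContinuousOn h (Ioi 0)) (h_nonneg : ∀ s, 0 < s → 0 ≤ h s)
    (hg : Continuous g) : Continuous (duhamel h g) := by
  refine continuous_iff_continuousAt.2 fun s => ?_
  rcases lt_or_ge 0 s with hs | hs
  · exact (hasDerivAt_duhamel hh h_nonneg hg hs).continuousAt
  have hbound (x : ℝ) : ‖duhamel h g x‖ ≤ ∫ τ in (0 : ℝ)..max x 0, |g τ| := by
    rcases le_total x 0 with hx | hx
    · simp [duhamel_of_nonpos hx, max_eq_right hx]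
    · rw [max_eq_left hx]
      exact abs_duhamel_le_integral_abs hh h_nonneg hg hx
  have hcont : Continuous fun x => ∫ τ in (0 : ℝ)..max x 0, |g τ| :=
    (intervalIntegral.continuous_primitive hg.abs.intervalIntegrable 0).comp
      (continuous_id.max continuous_const)
  rw [ContinuousAt, duhamel_of_nonpos hs]
  refine squeeze_zero_norm hbound ?_
  simpa [max_eq_right hs] using hcont.tendsto s

end Duhamel

section Picard

variable {h : ℝ → ℝ} {F : ℝ → ℝ → ℝ} {L : ℝ → ℝ≥0}

/-- The weight of the sup norm `sup |v s| / growthWeight F L s` for which Picard iteration for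
`v' + h v = F s v`, with `F s` Lipschitz of constant `L s`, is a contraction. The factor `2` yields
the contraction constant `1 / 2`, and the summand `|F s 0|` makes the iterates bounded. -/
noncomputable def growthWeight (F : ℝ → ℝ → ℝ) (L : ℝ → ℝ≥0) (s : ℝ) : ℝ :=
  Real.exp (∫ τ in (0 : ℝ)..s, (|F τ 0| + 2 * L τ))

lemma growthWeight_pos (s : ℝ) : 0 < growthWeight F L s := Real.exp_pos _

lemma one_le_growthWeight {s : ℝ} (hs : 0 ≤ s) : 1 ≤ growthWeight F L s :=
  Real.one_le_exp (intervalIntegral.integral_nonneg hs fun _ _ => by positivity)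

lemma hasDerivAt_growthWeight (hF : Continuous fun s => F s 0) (hL : Continuous L) (s : ℝ) :
    HasDerivAt (growthWeight F L) (growthWeight F L s * (|F s 0| + 2 * L s)) s := by
  have hrate : Continuous fun τ => |F τ 0| + 2 * (L τ : ℝ) := by fun_prop
  exact (hrate.integral_hasStrictDerivAt 0 s).hasDerivAt.exp

lemma continuous_growthWeight (hF : Continuous fun s => F s 0) (hL : Continuous L) :
    Continuous (growthWeight F L) :=
  continuous_iff_continuousAt.2 fun s => (hasDerivAt_growthWeight hF hL s).continuousAt

lemma abs_duhamel_le_mul_growthWeight (hh : ContinuousOn h (Ioi 0))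
    (h_nonneg : ∀ s, 0 < s → 0 ≤ h s) (hF : Continuous fun s => F s 0) (hL : Continuous L)
    {g : ℝ → ℝ} (hg : Continuous g) {C : ℝ} (hC : 0 ≤ C)
    (hgC : ∀ s, 0 ≤ s → |g s| ≤ C * (growthWeight F L s * (|F s 0| + 2 * L s))) (s : ℝ) :
    |duhamel h g s| ≤ C * growthWeight F L s := by
  have hE' : Continuous fun s => C * (growthWeight F L s * (|F s 0| + 2 * L s)) := by
    have := continuous_growthWeight hF hL
    fun_prop
  exact abs_duhamel_le_of_abs_le_deriv hh h_nonneg hg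
    (fun s => (hasDerivAt_growthWeight hF hL s).const_mul C) hE'
    (fun s => mul_nonneg hC (growthWeight_pos s).le) hgC s

lemma abs_forcing_mul_growthWeight_le (hFL : ∀ s, LipschitzWith (L s) (F s)) (u : ℝ →ᵇ ℝ) {s : ℝ}
    (hs : 0 ≤ s) :
    |F s (growthWeight F L s * u s)| ≤
      (1 + ‖u‖) * (growthWeight F L s * (|F s 0| + 2 * L s)) := by
  have hE := one_le_growthWeight (F := F) (L := L) hs
  set E := growthWeight F L s
  calc |F s (E * u s)| ≤ |F s 0| + |F s (E * u s) - F s 0| := by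
        linarith [abs_sub_abs_le_abs_sub (F s (E * u s)) (F s 0)]
    _ ≤ |F s 0| + L s * (E * ‖u‖) := by
        gcongr
        refine ((hFL s).dist_le_mul _ _).trans ?_
        rw [Real.dist_eq, sub_zero, abs_mul, abs_of_nonneg (zero_le_one.trans hE)]
        gcongr
        exact u.norm_coe_le_norm s
    _ ≤ (1 + ‖u‖) * (E * |F s 0|) + (1 + ‖u‖) * (E * (2 * L s)) := by
        have hF0 : |F s 0| ≤ E * |F s 0| := le_mul_of_one_le_left (abs_nonneg _) hE
        have hEL : 0 ≤ E * L s := by positivity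
        nlinarith [norm_nonneg u, abs_nonneg (F s 0)]
    _ = (1 + ‖u‖) * (E * (|F s 0| + 2 * L s)) := by ring

lemma abs_forcing_sub_le (hFL : ∀ s, LipschitzWith (L s) (F s)) (u w : ℝ →ᵇ ℝ) (s : ℝ) :
    |F s (growthWeight F L s * u s) - F s (growthWeight F L s * w s)| ≤
      1 / 2 * dist u w * (growthWeight F L s * (|F s 0| + 2 * L s)) := by
  have hE := (growthWeight_pos (F := F) (L := L) s).le
  set E := growthWeight F L s
  calc |F s (E * u s) - F s (E * w s)| ≤ L s * |E * u s - E * w s| :=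
        (hFL s).dist_le_mul _ _
    _ ≤ L s * (E * dist u w) := by
        rw [← mul_sub, abs_mul, abs_of_nonneg hE]
        gcongr
        exact u.dist_coe_le_dist (g := w) s
    _ ≤ 1 / 2 * dist u w * (E * |F s 0|) + L s * (E * dist u w) :=
        le_add_of_nonneg_left (by positivity)
    _ = 1 / 2 * dist u w * (E * (|F s 0| + 2 * L s)) := by ring

lemma exists_continuous_eq_duhamel (hh : ContinuousOn h (Ioi 0)) (h_nonneg : ∀ s, 0 < s → 0 ≤ h s)
    (hF : Continuous fun z : ℝ × ℝ => F z.1 z.2) (hL : Continuous L)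
    (hFL : ∀ s, LipschitzWith (L s) (F s)) :
    ∃ v : ℝ → ℝ, Continuous v ∧ v = duhamel h fun τ => F τ (v τ) := by
  have hF0 : Continuous fun s => F s 0 := hF.comp (continuous_id.prodMk continuous_const)
  have hE := continuous_growthWeight hF0 hL
  have hE_pos := growthWeight_pos (F := F) (L := L)
  set E := growthWeight F L
  have hg (u : ℝ →ᵇ ℝ) : Continuous fun τ => F τ (E τ * u τ) :=
    hF.comp (continuous_id.prodMk (hE.mul u.continuous))
  have hPicard (u : ℝ →ᵇ ℝ) :
      ∃ U : ℝ →ᵇ ℝ, ∀ s, U s = duhamel h (fun τ => F τ (E τ * u τ)) s / E s := by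
    refine ⟨.ofNormedAddCommGroup _ ((continuous_duhamel hh h_nonneg (hg u)).div hE
      fun s => (hE_pos s).ne') (1 + ‖u‖) fun s => ?_, fun s => rfl⟩
    rw [Real.norm_eq_abs, Pi.div_apply, abs_div, abs_of_pos (hE_pos s), div_le_iff₀ (hE_pos s)]
    exact abs_duhamel_le_mul_growthWeight hh h_nonneg hF0 hL (hg u) (by positivity)
      (fun τ hτ => abs_forcing_mul_growthWeight_le hFL u hτ) s
  choose Ψ hΨ using hPicard
  have hcontr : ContractingWith (1 / 2) Ψ := by
    refine ⟨by norm_num, LipschitzWith.of_dist_le_mul fun u w => ?_⟩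
    refine (BoundedContinuousFunction.dist_le (by positivity)).2 fun s => ?_
    rw [Real.dist_eq, hΨ, hΨ, ← sub_div, duhamel_sub_duhamel hh h_nonneg (hg u) (hg w), abs_div,
      abs_of_pos (hE_pos s), div_le_iff₀ (hE_pos s)]
    exact abs_duhamel_le_mul_growthWeight hh h_nonneg hF0 hL ((hg u).sub (hg w)) (by positivity)
      (fun τ _ => abs_forcing_sub_le hFL u w τ) s
  obtain ⟨u, hu⟩ : ∃ u, Ψ u = u := ⟨_, hcontr.fixedPoint_isFixedPt⟩
  refine ⟨fun s => E s * u s, hE.mul u.continuous, funext fun s => ?_⟩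
  have hus := hΨ u s
  rwa [hu, eq_div_iff (hE_pos s).ne', mul_comm] at hus

theorem exists_hasDerivAt_forcing_sub_mul (hh : ContinuousOn h (Ioi 0))
    (h_nonneg : ∀ s, 0 < s → 0 ≤ h s) (hF : Continuous fun z : ℝ × ℝ => F z.1 z.2)
    (hL : Continuous L) (hFL : ∀ s, LipschitzWith (L s) (F s)) :
    ∃ v : ℝ → ℝ, Continuous v ∧ v 0 = 0 ∧
      ∀ s, 0 < s → HasDerivAt v (F s (v s) - h s * v s) s := by
  obtain ⟨v, hv, hfix⟩ := exists_continuous_eq_duhamel hh h_nonneg hF hL hFL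
  refine ⟨v, hv, by rw [hfix, duhamel_of_nonpos le_rfl], fun s hs => ?_⟩
  have hderiv := hasDerivAt_duhamel hh h_nonneg (hF.comp (continuous_id.prodMk hv)) hs
  simp only [Function.comp_def, id, ← hfix] at hderiv
  exact hderiv

end Picard

-- A maximum of `v` on `[0, s]` exceeding `b s` would lie where `v` decreases.
lemma le_of_deriv_neg_above {v v' b : ℝ → ℝ} (hv : ContinuousOn v (Ici 0))
    (hv' : ∀ s, 0 < s → HasDerivAt v (v' s) s) (hb : MonotoneOn b (Ioi 0))
    (h_init : ∀ s, 0 < s → v 0 ≤ b s) (h_neg : ∀ s, 0 < s → b s < v s → v' s < 0)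
    {s : ℝ} (hs : 0 < s) : v s ≤ b s := by
  by_contra! hlt
  obtain ⟨x, hx, hmax⟩ := isCompact_Icc.exists_isMaxOn (nonempty_Icc.2 hs.le)
    (hv.mono Icc_subset_Ici_self)
  have hsx : b s < v x := hlt.trans_le (hmax (right_mem_Icc.2 hs.le))
  have hx_pos : 0 < x := by
    refine hx.1.lt_of_ne ?_
    rintro rfl
    exact (h_init s hs).not_gt hsx
  have hdir : 0 - x ∈ posTangentConeAt (Icc 0 s) x :=
    sub_mem_posTangentConeAt_of_segment_subset
      ((convex_Icc 0 s).segment_subset hx (left_mem_Icc.2 hs.le))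
  have hderiv : (0 - x) * v' x ≤ 0 := by
    simpa using hmax.localize.hasFDerivWithinAt_nonpos
      (hv' x hx_pos).hasFDerivAt.hasFDerivWithinAt hdir
  have hneg : v' x < 0 := h_neg x hx_pos ((hb hx_pos hs hx.2).trans_lt hsx)
  nlinarith

section Slope

variable {r : ℝ → ℝ}

/-- The function `w ↦ w² (1 - w)` on `[0, 1]`, extended by its boundary value `0`. -/
noncomputable def cutoffCubic (w : ℝ) : ℝ :=
  (projIcc (0 : ℝ) 1 zero_le_one w : ℝ) ^ 2 * (1 - projIcc (0 : ℝ) 1 zero_le_one w)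

lemma cutoffCubic_of_nonpos {w : ℝ} (hw : w ≤ 0) : cutoffCubic w = 0 := by
  simp [cutoffCubic, projIcc_of_le_left _ hw]

lemma cutoffCubic_of_one_le {w : ℝ} (hw : 1 ≤ w) : cutoffCubic w = 0 := by
  simp [cutoffCubic, projIcc_of_right_le _ hw]

lemma cutoffCubic_of_mem {w : ℝ} (hw : w ∈ Icc (0 : ℝ) 1) : cutoffCubic w = w ^ 2 * (1 - w) := by
  simp only [cutoffCubic, projIcc_of_mem _ hw]

lemma abs_cutoffCubic_le_one (w : ℝ) : |cutoffCubic w| ≤ 1 := by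
  obtain ⟨h0, h1⟩ := (projIcc (0 : ℝ) 1 zero_le_one w).2
  rw [cutoffCubic, abs_of_nonneg (mul_nonneg (sq_nonneg _) (sub_nonneg.2 h1))]
  exact mul_le_one₀ (pow_le_one₀ h0 h1) (sub_nonneg.2 h1) (sub_le_self _ h0)

lemma lipschitzWith_cutoffCubic : LipschitzWith 1 cutoffCubic := by
  refine LipschitzWith.of_dist_le_mul fun x y => ?_
  have hproj := (LipschitzWith.projIcc (zero_le_one' ℝ)).dist_le_mul x y
  simp only [cutoffCubic, NNReal.coe_one, one_mul, Subtype.dist_eq] at hproj ⊢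
  obtain ⟨hx0, hx1⟩ := (projIcc (0 : ℝ) 1 zero_le_one x).2
  obtain ⟨hy0, hy1⟩ := (projIcc (0 : ℝ) 1 zero_le_one y).2
  refine le_trans ?_ hproj
  set p := (projIcc (0 : ℝ) 1 zero_le_one x : ℝ)
  set q := (projIcc (0 : ℝ) 1 zero_le_one y : ℝ)
  have hslope : |p + q - (p ^ 2 + p * q + q ^ 2)| ≤ 1 := by
    rw [abs_le]
    constructor <;> nlinarith [mul_nonneg hx0 hy0, mul_nonneg (sub_nonneg.2 hx1) (sub_nonneg.2 hy1)]
  calc |p ^ 2 * (1 - p) - q ^ 2 * (1 - q)| = |p + q - (p ^ 2 + p * q + q ^ 2)| * |p - q| := by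
        rw [← abs_mul]
        ring_nf
    _ ≤ |p - q| := mul_le_of_le_one_left (abs_nonneg _) hslope

/-- The forcing term `1 + x² (1 - x / r)` of the soliton equation `v' + v / r = 1 + v² (1 - v / r)`,
replaced by `1` outside `0 ≤ x ≤ r s`. It also equals `1` where `r s = 0`. -/
noncomputable def truncatedForcing (r : ℝ → ℝ) (s x : ℝ) : ℝ :=
  1 + r s ^ 2 * cutoffCubic (x / r s)

lemma lipschitzWith_truncatedForcing (s : ℝ) : LipschitzWith ‖r s‖₊ (truncatedForcing r s) := by
  refine LipschitzWith.of_dist_le_mul fun x y => ?_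
  rcases eq_or_ne (r s) 0 with hr | hr
  · simp [truncatedForcing, hr]
  calc |1 + r s ^ 2 * cutoffCubic (x / r s) - (1 + r s ^ 2 * cutoffCubic (y / r s))|
      = r s ^ 2 * |cutoffCubic (x / r s) - cutoffCubic (y / r s)| := by
        rw [add_sub_add_left_eq_sub, ← mul_sub, abs_mul, abs_of_nonneg (sq_nonneg (r s))]
    _ ≤ |r s| ^ 2 * |x / r s - y / r s| := by
        rw [sq_abs]
        gcongr r s ^ 2 * ?_
        exact (lipschitzWith_cutoffCubic.dist_le_mul (x / r s) (y / r s)).trans_eq (one_mul _)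
    _ = |r s| * |x - y| := by
        rw [← sub_div, abs_div]
        field_simp

lemma continuous_truncatedForcing (hr : Continuous r) :
    Continuous fun z : ℝ × ℝ => truncatedForcing r z.1 z.2 := by
  refine continuous_iff_continuousAt.2 fun z => continuousAt_const.add ?_
  have hr1 : ContinuousAt (fun z : ℝ × ℝ => r z.1) z := by fun_prop
  by_cases hz : r z.1 = 0
  · have hsq : Tendsto (fun z : ℝ × ℝ => r z.1 ^ 2) (𝓝 z) (𝓝 0) := by
      simpa only [hz, zero_pow two_ne_zero] using hr1.tendsto.pow 2
    rw [ContinuousAt, hz, zero_pow two_ne_zero, zero_mul]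
    exact hsq.zero_mul_isBoundedUnder_le
      (isBoundedUnder_of ⟨1, fun z => abs_cutoffCubic_le_one (z.2 / r z.1)⟩)
  · exact (hr1.pow 2).mul
      (lipschitzWith_cutoffCubic.continuous.continuousAt.comp (continuousAt_snd.div hr1 hz))

theorem exists_hasDerivAt_soliton_slope (hr : Continuous r) (hr_mono : MonotoneOn r (Ioi 0))
    (hr_pos : ∀ s, 0 < s → 0 < r s) :
    ∃ v : ℝ → ℝ, Continuous v ∧ v 0 = 0 ∧
      ∀ s, 0 < s → HasDerivAt v ((1 + v s ^ 2) * (1 - v s / r s)) s := by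
  obtain ⟨v, hv, hv0, hv'⟩ := exists_hasDerivAt_forcing_sub_mul (h := fun s => (r s)⁻¹)
    (hr.continuousOn.inv₀ fun s hs => (hr_pos s hs).ne') (fun s hs => (inv_pos.2 (hr_pos s hs)).le)
    (continuous_truncatedForcing hr) hr.nnnorm lipschitzWith_truncatedForcing
  have hv_nonneg (s : ℝ) (hs : 0 < s) : 0 ≤ v s := by
    refine neg_nonpos.1 (le_of_deriv_neg_above (b := fun _ => 0) hv.neg.continuousOn
      (fun s hs => (hv' s hs).neg) monotoneOn_const (by simp [hv0]) (fun s hs hlt => ?_) hs)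
    have hneg : v s < 0 := neg_pos.1 hlt
    have hdiv : v s / r s < 0 := div_neg_of_neg_of_pos hneg (hr_pos s hs)
    rw [truncatedForcing, cutoffCubic_of_nonpos hdiv.le, inv_mul_eq_div]
    linarith
  have hv_le (s : ℝ) (hs : 0 < s) : v s ≤ r s := by
    refine le_of_deriv_neg_above hv.continuousOn hv' hr_mono
      (fun s hs => hv0.trans_le (hr_pos s hs).le) (fun s hs hlt => ?_) hs
    have hdiv : 1 < v s / r s := (one_lt_div (hr_pos s hs)).2 hlt
    rw [truncatedForcing, cutoffCubic_of_one_le hdiv.le, inv_mul_eq_div]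
    linarith
  refine ⟨v, hv, hv0, fun s hs => (hv' s hs).congr_deriv ?_⟩
  have hr_ne := (hr_pos s hs).ne'
  rw [truncatedForcing, cutoffCubic_of_mem
    ⟨div_nonneg (hv_nonneg s hs) (hr_pos s hs).le, (div_le_one (hr_pos s hs)).2 (hv_le s hs)⟩]
  field_simp
  ring

end Slope

lemma exists_contDiff_derivWithin_Ici_eq {v : ℝ → ℝ} (hv : Continuous v) (a c : ℝ) :
    ∃ f : ℝ → ℝ, ContDiff ℝ 1 f ∧ f a = c ∧ EqOn (derivWithin f (Ici a)) v (Ici a) := by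
  have hderiv (s : ℝ) : HasDerivAt (fun s => c + ∫ τ in a..s, v τ) (v s) s :=
    (hv.integral_hasStrictDerivAt a s).hasDerivAt.const_add c
  refine ⟨fun s => c + ∫ τ in a..s, v τ,
    contDiff_one_iff_deriv.2 ⟨fun s => (hderiv s).differentiableAt, ?_⟩, by simp,
    fun s hs => (hderiv s).hasDerivWithinAt.derivWithin (uniqueDiffOn_Ici a s hs)⟩
  rwa [funext fun s => (hderiv s).deriv]

lemma continuous_tanh : Continuous Real.tanh := by
  simp only [funext Real.tanh_eq_sinh_div_cosh]
  exact Real.continuous_sinh.div Real.continuous_cosh fun s => (Real.cosh_pos s).ne'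

lemma monotone_tanh : Monotone Real.tanh := fun s t hst => by
  rw [Real.tanh_eq_sinh_div_cosh, Real.tanh_eq_sinh_div_cosh,
    div_le_div_iff₀ (Real.cosh_pos s) (Real.cosh_pos t)]
  have hsub := Real.sinh_nonneg_iff.2 (sub_nonneg.2 hst)
  rw [Real.sinh_sub] at hsub
  linarith

lemma tanh_pos {s : ℝ} (hs : 0 < s) : 0 < Real.tanh s := by
  rw [Real.tanh_eq_sinh_div_cosh]
  exact div_pos (Real.sinh_pos_iff.2 hs) (Real.cosh_pos s)

end TranslatingSoliton

open TranslatingSoliton in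
/-- Here `r s` is the reciprocal of the mean curvature of the geodesic sphere of radius `s`: it is
`tanh s / (n - 1)` in `ℍⁿ` and `s / (n - 1)` in `ℝⁿ`. -/
theorem stmt_10_general {r : ℝ → ℝ} (hr : ContinuousOn r (Ici 0)) (hr_mono : MonotoneOn r (Ioi 0))
    (hr_pos : ∀ s, 0 < s → 0 < r s) (f₁ : ℝ) :
    ∃ f : ℝ → ℝ,
      ContDiffOn ℝ 1 f (Ici 0) ∧
      (∀ s, 0 < s → DifferentiableAt ℝ (derivWithin f (Ici 0)) s) ∧
      f 0 = f₁ ∧ derivWithin f (Ici 0) 0 = 0 ∧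
      ∀ s, 0 < s →
        deriv (derivWithin f (Ici 0)) s =
          (1 + derivWithin f (Ici 0) s ^ 2) * (1 - (r s)⁻¹ * derivWithin f (Ici 0) s) := by
  have hext : EqOn (fun s => r (max s 0)) r (Ioi 0) := fun s hs => by
    simp only [max_eq_left (mem_Ioi.1 hs).le]
  obtain ⟨v, hv, hv0, hv'⟩ := exists_hasDerivAt_soliton_slope (r := fun s => r (max s 0))
    (hr.comp_continuous (by fun_prop) fun s => le_max_right s 0) (hr_mono.congr hext.symm)
    (fun s hs => (hr_pos s hs).trans_eq (hext hs).symm)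
  obtain ⟨f, hf, hf0, hfv⟩ := exists_contDiff_derivWithin_Ici_eq hv 0 f₁
  have hf'' (s : ℝ) (hs : 0 < s) :
      HasDerivAt (derivWithin f (Ici 0)) ((1 + v s ^ 2) * (1 - v s / r s)) s := by
    rw [← hext hs]
    exact (hv' s hs).congr_of_eventuallyEq (hfv.eventuallyEq_of_mem (Ici_mem_nhds hs))
  refine ⟨f, hf.contDiffOn, fun s hs => (hf'' s hs).differentiableAt, hf0,
    (hfv self_mem_Ici).trans hv0, fun s hs => ?_⟩
  rw [(hf'' s hs).deriv, hfv hs.le, inv_mul_eq_div]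

/-- Global existence of rotationally symmetric graphical translating solitons
in the Riemannian product ℍⁿ × ℝ. -/
theorem stmt_10 (n : ℕ) (hn : 2 ≤ n) (f₁ : ℝ) :
    ∃ f : ℝ → ℝ,
      ContDiffOn ℝ 1 f (Set.Ici 0) ∧
      (∀ s : ℝ, 0 < s → DifferentiableAt ℝ (derivWithin f (Set.Ici 0)) s) ∧
      f 0 = f₁ ∧ derivWithin f (Set.Ici 0) 0 = 0 ∧
      ∀ s : ℝ, 0 < s →
        deriv (derivWithin f (Set.Ici 0)) s =
          (1 + (derivWithin f (Set.Ici 0) s) ^ 2) *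
            (1 - ((n : ℝ) - 1) * (Real.cosh s / Real.sinh s) *
              derivWithin f (Set.Ici 0) s) := by
  have hn_pos : (0 : ℝ) < n - 1 := sub_pos.2 (by exact_mod_cast hn)
  simpa only [Real.tanh_eq_sinh_div_cosh, inv_div, div_div_eq_mul_div, mul_div_assoc] using
    stmt_10_general (r := fun s => Real.tanh s / (n - 1))
      (TranslatingSoliton.continuous_tanh.div_const _).continuousOn
      ((TranslatingSoliton.monotone_tanh.div_const hn_pos.le).monotoneOn _)
      (fun s hs => div_pos (TranslatingSoliton.tanh_pos hs) hn_pos) f₁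
end
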